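/- arXiv:1503.01869 — 2 statements merged into one kernel-verified Lean document; each statement's English description precedes it below -/
import Mathlib

section
/- Let q ∈ L¹[0,1] be a real-valued integrable function and let t ∈ [0,2π) be fixed. Suppose that every eigenvalue λ of the quasi-periodic problem L_t(q) satisfies λ ≥ min{t², (2π−t)²}, and that for every n ∈ ℕ (n ≥ 1) the number (2nπ − t)² is an eigenvalue of L_t(q). Then q = 0 almost everywhere on [0,1]. -/
open MeasureTheory Set

/-- `IsQPEigenpair q t lam y g h` says that `y` (with first derivative `g` and
second derivative `h`) is an eigenfunction of the quasi-periodic problem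
`L_t(q)` on `[0,1]` with eigenvalue `lam`: `y` is nonzero, continuously
differentiable on `[0,1]` with derivative `g`, `g` is absolutely continuous
with a.e. derivative `h` (encoded via the fundamental theorem of calculus with
`h` integrable), the equation `-y'' + q y = lam y` holds a.e. on `[0,1]`, and
the quasi-periodic boundary conditions hold. -/
def IsQPEigenpair (q : ℝ → ℝ) (t : ℝ) (lam : ℂ) (y g h : ℝ → ℂ) : Prop :=
  (∃ x ∈ Icc (0:ℝ) 1, y x ≠ 0) ∧
  (∀ x ∈ Icc (0:ℝ) 1, HasDerivWithinAt y (g x) (Icc (0:ℝ) 1) x) ∧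
  ContinuousOn g (Icc (0:ℝ) 1) ∧
  IntegrableOn h (Icc (0:ℝ) 1) ∧
  (∀ x ∈ Icc (0:ℝ) 1, g x = g 0 + ∫ s in (0:ℝ)..x, h s) ∧
  (∀ᵐ x ∂(volume.restrict (Icc (0:ℝ) 1)), -h x + (q x : ℂ) * y x = lam * y x) ∧
  y 1 = Complex.exp (Complex.I * t) * y 0 ∧
  g 1 = Complex.exp (Complex.I * t) * g 0

/-- `lam` is an eigenvalue of the quasi-periodic problem `L_t(q)`. -/
def IsQPEigenvalue (q : ℝ → ℝ) (t : ℝ) (lam : ℂ) : Prop :=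
  ∃ y g h : ℝ → ℂ, IsQPEigenpair q t lam y g h

/-!
Expand an eigenfunction `y` with eigenvalue `k ^ 2` in the plane waves `exp (± i k x)` by variation
of constants. The amplitudes are constant up to `O(sup |y|)`, while `k * sup |y|` is at most their
sum up to the same error. If `exp (i k x)` satisfies the boundary condition, then `q y` is
orthogonal to it, which bounds the mean of `q` by the Fourier coefficient of `q` at frequency `2 k`
plus `O(1 / k)`. By the Riemann–Lebesgue lemma, infinitely many such eigenvalues force the mean of
`q` to vanish.

The lowest eigenvalue is the minimum of the energy `∫ |y'| ^ 2 + q |y| ^ 2` over quasi-periodic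
functions of unit `L²` norm. An admissible wave `exp (i k x)` has energy `k ^ 2` plus the mean of
`q`, hence energy `k ^ 2`. As soon as `k ^ 2` is at most the lowest eigenvalue, the wave is
therefore itself a minimizer, so an eigenfunction, and its equation reads `q = 0`.
-/

open Filter Topology
open scoped ComplexConjugate RealInnerProductSpace

section Primitive

variable {E F A : Type*} [NormedAddCommGroup E] [NormedSpace ℝ E]
  [NormedAddCommGroup F] [NormedSpace ℝ F]
  [NormedRing A] [NormedAlgebra ℝ A] {a b : ℝ}

/-- `IsPrimitive f f' a b` says that `f` is absolutely continuous on the interval with end points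
`a` and `b` and has the a.e. derivative `f'` there, encoded by the fundamental theorem of
calculus. -/
structure IsPrimitive (f f' : ℝ → E) (a b : ℝ) : Prop where
  intervalIntegrable : IntervalIntegrable f' volume a b
  eq_add_integral : ∀ x ∈ uIcc a b, f x = f a + ∫ s in a..x, f' s

theorem absolutelyContinuousOnInterval_of_dist_le {X Y : Type*} [PseudoMetricSpace X]
    [PseudoMetricSpace Y] {f : ℝ → X} {g : ℝ → Y} (hg : AbsolutelyContinuousOnInterval g a b)
    (h : ∀ x ∈ uIcc a b, ∀ y ∈ uIcc a b, dist (f x) (f y) ≤ dist (g x) (g y)) :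
    AbsolutelyContinuousOnInterval f a b := by
  refine squeeze_zero' (.of_forall fun _ => Finset.sum_nonneg fun _ _ => dist_nonneg) ?_ hg
  filter_upwards [mem_inf_of_right (mem_principal_self _)] with P hP
  exact Finset.sum_le_sum fun i hi => h _ (hP.1 i hi).1 _ (hP.1 i hi).2

theorem absolutelyContinuousOnInterval_integral {f : ℝ → E}
    (hf : IntervalIntegrable f volume a b) :
    AbsolutelyContinuousOnInterval (fun x => ∫ s in a..x, f s) a b := by
  refine absolutelyContinuousOnInterval_of_dist_le
    (hf.norm.absolutelyContinuousOnInterval_intervalIntegral left_mem_uIcc) fun x hx y hy => ?_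
  have hax : IntervalIntegrable f volume a x := hf.mono_set (uIcc_subset_uIcc_left hx)
  have hay : IntervalIntegrable f volume a y := hf.mono_set (uIcc_subset_uIcc_left hy)
  rw [dist_eq_norm, Real.dist_eq, intervalIntegral.integral_interval_sub_left hax hay,
    intervalIntegral.integral_interval_sub_left hax.norm hay.norm]
  exact intervalIntegral.norm_integral_le_abs_integral_norm

namespace IsPrimitive

variable {f f' g g' : ℝ → E} {u u' v v' : ℝ → A}

theorem absolutelyContinuousOnInterval (hf : IsPrimitive f f' a b) :
    AbsolutelyContinuousOnInterval f a b := by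
  refine absolutelyContinuousOnInterval_of_dist_le
    (absolutelyContinuousOnInterval_integral hf.intervalIntegrable) fun x hx y hy => ?_
  rw [hf.eq_add_integral x hx, hf.eq_add_integral y hy, dist_add_left]

theorem continuousOn (hf : IsPrimitive f f' a b) : ContinuousOn f (uIcc a b) :=
  hf.absolutelyContinuousOnInterval.continuousOn

theorem ae_hasDerivAt [CompleteSpace E] (hf : IsPrimitive f f' a b) :
    ∀ᵐ x, x ∈ uIcc a b → HasDerivAt f (f' x) x := by
  filter_upwards [hf.intervalIntegrable.ae_hasDerivAt_integral, compl_mem_ae_iff.mpr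
    (measure_singleton (μ := volume) a), compl_mem_ae_iff.mpr (measure_singleton (μ := volume) b)]
    with x hderiv hxa hxb hx
  have hnhds : uIcc a b ∈ 𝓝 x := by
    refine Icc_mem_nhds (lt_of_le_of_ne hx.1 ?_) (lt_of_le_of_ne hx.2 ?_) <;> grind
  refine ((hderiv hx a left_mem_uIcc).const_add (f a)).congr_of_eventuallyEq ?_
  filter_upwards [hnhds] with z hz using hf.eq_add_integral z hz

theorem of_ae_hasDerivAt [CompleteSpace E] (hf : AbsolutelyContinuousOnInterval f a b)
    (hf' : IntervalIntegrable f' volume a b)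
    (hderiv : ∀ᵐ x, x ∈ uIcc a b → HasDerivAt f (f' x) x) : IsPrimitive f f' a b := by
  refine ⟨hf', fun x hx => ?_⟩
  have hzero : ∀ᵐ x, x ∈ uIcc a b → HasDerivAt (fun x => f x - ∫ s in a..x, f' s) 0 x := by
    filter_upwards [hderiv, hf'.ae_hasDerivAt_integral] with x h₁ h₂ hx
    simpa only [sub_self] using (h₁ hx).fun_sub (h₂ hx a left_mem_uIcc)
  obtain ⟨c, hc⟩ :=
    (hf.fun_sub (absolutelyContinuousOnInterval_integral hf')).const_of_ae_hasDerivAt_zero hzero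
  have ha := hc a left_mem_uIcc
  rw [intervalIntegral.integral_same, sub_zero] at ha
  rw [ha, ← hc x hx, sub_add_cancel]

theorem of_hasDerivAt [CompleteSpace E] (hderiv : ∀ x ∈ uIcc a b, HasDerivAt f (f' x) x)
    (hf' : ContinuousOn f' (uIcc a b)) : IsPrimitive f f' a b := by
  refine ⟨hf'.intervalIntegrable, fun x hx => ?_⟩
  have hsub : uIcc a x ⊆ uIcc a b := uIcc_subset_uIcc_left hx
  rw [intervalIntegral.integral_eq_sub_of_hasDerivAt (fun z hz => hderiv z (hsub hz))
    (hf'.mono hsub).intervalIntegrable, add_sub_cancel]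

theorem add (hf : IsPrimitive f f' a b) (hg : IsPrimitive g g' a b) :
    IsPrimitive (fun x => f x + g x) (fun x => f' x + g' x) a b := by
  refine ⟨hf.intervalIntegrable.add hg.intervalIntegrable, fun x hx => ?_⟩
  have hsub : uIcc a x ⊆ uIcc a b := uIcc_subset_uIcc_left hx
  rw [intervalIntegral.integral_add (hf.intervalIntegrable.mono_set hsub)
    (hg.intervalIntegrable.mono_set hsub), hf.eq_add_integral x hx, hg.eq_add_integral x hx]
  abel

theorem clm_apply [CompleteSpace E] [CompleteSpace F] (L : E →L[ℝ] F)
    (hf : IsPrimitive f f' a b) :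
    IsPrimitive (fun x => L (f x)) (fun x => L (f' x)) a b := by
  refine ⟨⟨L.integrable_comp hf.intervalIntegrable.1, L.integrable_comp hf.intervalIntegrable.2⟩,
    fun x hx => ?_⟩
  rw [L.intervalIntegral_comp_comm (hf.intervalIntegrable.mono_set (uIcc_subset_uIcc_left hx)),
    ← map_add, ← hf.eq_add_integral x hx]

theorem congr_deriv_ae (hf : IsPrimitive f f' a b) (h : f' =ᵐ[volume.restrict (uIoc a b)] g') :
    IsPrimitive f g' a b := by
  refine ⟨hf.intervalIntegrable.congr_ae h, fun x hx => (hf.eq_add_integral x hx).trans ?_⟩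
  rw [intervalIntegral.integral_congr_ae_restrict (ae_restrict_of_ae_restrict_of_subset
    (uIoc_subset_uIoc_of_uIcc_subset_uIcc (uIcc_subset_uIcc_left hx)) h)]

theorem ae_eq [CompleteSpace E] (hf : IsPrimitive f f' a b) (hg : IsPrimitive g g' a b)
    (hfg : EqOn f g (uIcc a b)) : ∀ᵐ x, x ∈ uIcc a b → f' x = g' x := by
  have hf' : IsPrimitive f g' a b := ⟨hg.intervalIntegrable, fun x hx => by
    rw [hfg hx, hfg left_mem_uIcc, hg.eq_add_integral x hx]⟩
  filter_upwards [hf.ae_hasDerivAt, hf'.ae_hasDerivAt] with x h₁ h₂ hx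
  exact (h₁ hx).unique (h₂ hx)

theorem mul [NormMulClass A] [CompleteSpace A] (hu : IsPrimitive u u' a b)
    (hv : IsPrimitive v v' a b) :
    IsPrimitive (fun x => u x * v x) (fun x => u' x * v x + u x * v' x) a b := by
  refine of_ae_hasDerivAt
    (hu.absolutelyContinuousOnInterval.smul hv.absolutelyContinuousOnInterval)
    ((hu.intervalIntegrable.mul_continuousOn hv.continuousOn).add
      (hv.intervalIntegrable.continuousOn_mul hu.continuousOn)) ?_
  filter_upwards [hu.ae_hasDerivAt, hv.ae_hasDerivAt] with x hux hvx hx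
  exact (hux hx).fun_mul (hvx hx)

end IsPrimitive

end Primitive

section Rayleigh

variable {V H : Type*} [NormedAddCommGroup V] [NormedSpace ℝ V]
  [NormedAddCommGroup H] [InnerProductSpace ℝ H]

/-- The pullback `(u, z) ↦ ⟪L u, L z⟫` of the inner product along `L`. -/
noncomputable def innerForm (L : V →L[ℝ] H) : V →L[ℝ] V →L[ℝ] ℝ :=
  (isBoundedBilinearMap_inner (𝕜 := ℝ)).toContinuousLinearMap.bilinearComp L L

theorem innerForm_apply (L : V →L[ℝ] H) (u z : V) : innerForm L u z = ⟪L u, L z⟫ := rfl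

theorem innerForm_self (L : V →L[ℝ] H) (u : V) : innerForm L u u = ‖L u‖ ^ 2 :=
  real_inner_self_eq_norm_sq _

theorem continuous_innerForm : Continuous (innerForm : (V →L[ℝ] H) → V →L[ℝ] V →L[ℝ] ℝ) := by
  have heq : (innerForm : (V →L[ℝ] H) → _) = fun L => ((ContinuousLinearMap.compL ℝ V H ℝ).flip
      L).comp ((isBoundedBilinearMap_inner (𝕜 := ℝ)).toContinuousLinearMap.comp L) := rfl
  rw [heq]
  exact (ContinuousLinearMap.continuous _).clm_comp (continuous_const.clm_comp continuous_id)

/-- Gårding's inequality for the quadratic form of `B`: it controls the norm up to a multiple of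
`‖J u‖ ^ 2`. -/
def IsCoerciveModulo (B : V →L[ℝ] V →L[ℝ] ℝ) (J : V →L[ℝ] H) : Prop :=
  ∃ C₁ > 0, ∃ C₂, ∀ u, ‖u‖ ^ 2 ≤ C₁ * B u u + C₂ * ‖J u‖ ^ 2

theorem continuous_apply_self (B : V →L[ℝ] V →L[ℝ] ℝ) : Continuous fun u => B u u :=
  B.continuous.clm_apply continuous_id

theorem apply_sub_self_le {B : V →L[ℝ] V →L[ℝ] ℝ} (hB : ∀ z, 0 ≤ B z z) (u v : V) :
    B (u - v) (u - v) ≤ 2 * B u u + 2 * B v v := by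
  have hsum := hB (u + v)
  simp only [map_add, map_sub, add_apply, sub_apply] at hsum ⊢
  linarith

theorem apply_eq_zero_of_apply_self_eq_zero {B : V →L[ℝ] V →L[ℝ] ℝ} (hB : ∀ z, 0 ≤ B z z)
    (hsymm : ∀ u z, B u z = B z u) {u : V} (hu : B u u = 0) (z : V) : B u z = 0 := by
  have h := LinearMap.BilinForm.apply_mul_apply_le_of_forall_zero_le
    (ContinuousLinearMap.toBilinForm B) hB u z
  simp only [ContinuousLinearMap.toBilinForm_apply] at h
  rw [hu, zero_mul, hsymm z u] at h
  exact mul_self_eq_zero.mp (le_antisymm h (mul_self_nonneg _))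

namespace IsCoerciveModulo

variable {B : V →L[ℝ] V →L[ℝ] ℝ} {J : V →L[ℝ] H}

theorem sub_innerForm (h : IsCoerciveModulo B J) (l : ℝ) :
    IsCoerciveModulo (B - l • innerForm J) J := by
  obtain ⟨C₁, hC₁, C₂, h⟩ := h
  refine ⟨C₁, hC₁, C₂ + C₁ * l, fun u => (h u).trans_eq ?_⟩
  simp only [sub_apply, smul_apply, innerForm_self, smul_eq_mul]
  ring

theorem isBounded_range (h : IsCoerciveModulo B J) {u : ℕ → V} (hJ : ∀ n, ‖J (u n)‖ = 1) {l : ℝ}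
    (hu : Tendsto (fun n => B (u n) (u n)) atTop (𝓝 l)) : ∃ R, ∀ n, ‖u n‖ ≤ R := by
  obtain ⟨C₁, hC₁, C₂, h⟩ := h
  obtain ⟨M, hM⟩ := hu.bddAbove_range
  refine ⟨√(C₁ * M + C₂), fun n => Real.le_sqrt_of_sq_le ((h (u n)).trans ?_)⟩
  rw [hJ, one_pow, mul_one]
  gcongr
  exact hM (mem_range_self n)

theorem cauchySeq (h : IsCoerciveModulo B J) (hB : ∀ z, 0 ≤ B z z) {u : ℕ → V}
    (hu : Tendsto (fun n => B (u n) (u n)) atTop (𝓝 0)) (hJ : CauchySeq fun n => J (u n)) :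
    CauchySeq u := by
  obtain ⟨C₁, hC₁, C₂, h⟩ := h
  rw [cauchySeq_iff_tendsto_dist_atTop_0] at hJ ⊢
  have hbound : Tendsto (fun p : ℕ × ℕ => √(C₁ * (2 * B (u p.1) (u p.1) + 2 * B (u p.2) (u p.2))
      + C₂ * dist (J (u p.1)) (J (u p.2)) ^ 2)) atTop (𝓝 0) := by
    rw [← prod_atTop_atTop_eq] at hJ ⊢
    have h₁ := hu.comp (tendsto_fst (f := atTop) (g := (atTop : Filter ℕ)))
    have h₂ := hu.comp (tendsto_snd (f := (atTop : Filter ℕ)) (g := atTop))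
    have := ((((h₁.const_mul 2).add (h₂.const_mul 2)).const_mul C₁).add
      ((hJ.pow 2).const_mul C₂)).sqrt
    simpa using this
  refine squeeze_zero (fun _ => dist_nonneg) (fun p => Real.le_sqrt_of_sq_le ?_) hbound
  rw [dist_eq_norm, dist_eq_norm, ← map_sub]
  refine (h _).trans ?_
  gcongr
  exact apply_sub_self_le hB _ _

theorem exists_apply_self_eq_zero [CompleteSpace V] (h : IsCoerciveModulo B J)
    (hcompact : IsCompactOperator J) (hB : ∀ z, 0 ≤ B z z) {u : ℕ → V} (hJ : ∀ n, ‖J (u n)‖ = 1)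
    (hu : Tendsto (fun n => B (u n) (u n)) atTop (𝓝 0)) : ∃ v, ‖J v‖ = 1 ∧ B v v = 0 := by
  obtain ⟨R, hR⟩ := h.isBounded_range hJ hu
  obtain ⟨p, -, φ, hφ, hp⟩ := (hcompact.isCompact_closure_image_closedBall R).tendsto_subseq
    fun n => subset_closure ⟨u n, mem_closedBall_zero_iff.mpr (hR n), rfl⟩
  have hsub := hu.comp hφ.tendsto_atTop
  obtain ⟨v, hv⟩ := cauchySeq_tendsto_of_complete (h.cauchySeq hB hsub hp.cauchySeq)
  refine ⟨v, ?_, tendsto_nhds_unique (((continuous_apply_self B).tendsto v).comp hv) hsub⟩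
  have hnorm := ((J.continuous.norm.tendsto v).comp hv)
  exact tendsto_nhds_unique hnorm (by simp [Function.comp_def, hJ])

theorem exists_lowest_value (h : IsCoerciveModulo B J) (hJ : ∃ z, J z ≠ 0) :
    ∃ l, (∀ z, l * ‖J z‖ ^ 2 ≤ B z z) ∧ ∃ u : ℕ → V, (∀ n, ‖J (u n)‖ = 1) ∧
      Tendsto (fun n => B (u n) (u n)) atTop (𝓝 l) := by
  obtain ⟨C₁, hC₁, C₂, h⟩ := h
  obtain ⟨z₀, hz₀⟩ := hJ
  have hscale (z : V) (hz : J z ≠ 0) : ‖J (‖J z‖⁻¹ • z)‖ = 1 := by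
    rw [map_smul, norm_smul, norm_inv, norm_norm, inv_mul_cancel₀ (norm_ne_zero_iff.mpr hz)]
  let S : Set ℝ := (fun u => B u u) '' {u | ‖J u‖ = 1}
  have hne : S.Nonempty := ⟨_, mem_image_of_mem _ (hscale z₀ hz₀)⟩
  have hbdd : BddBelow S := by
    refine ⟨-C₂ / C₁, ?_⟩
    rintro _ ⟨u, hu, rfl⟩
    have := (sq_nonneg ‖u‖).trans (h u)
    rw [hu.out] at this
    rw [div_le_iff₀ hC₁]
    linarith
  refine ⟨sInf S, fun z => ?_, ?_⟩
  · by_cases hz : J z = 0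
    · have := (sq_nonneg ‖z‖).trans (h z)
      rw [hz, norm_zero] at this ⊢
      nlinarith
    · have hle := csInf_le hbdd (mem_image_of_mem _ (hscale z hz))
      simp only [map_smul, smul_apply, smul_eq_mul, ← mul_assoc] at hle
      rw [← mul_inv, ← sq, inv_mul_eq_div, le_div_iff₀ (by positivity)] at hle
      exact hle
  · obtain ⟨r, -, hr, hrS⟩ := exists_seq_tendsto_sInf hne hbdd
    choose u hu hru using hrS
    exact ⟨u, hu, by simpa only [hru] using hr⟩

theorem exists_minimizer [CompleteSpace V] (h : IsCoerciveModulo B J)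
    (hcompact : IsCompactOperator J) (hJ : ∃ z, J z ≠ 0) :
    ∃ l u, ‖J u‖ = 1 ∧ B u u = l ∧ ∀ z, l * ‖J z‖ ^ 2 ≤ B z z := by
  obtain ⟨l, hl, u, hu, hul⟩ := h.exists_lowest_value hJ
  have hQ (z : V) : (B - l • innerForm J) z z = B z z - l * ‖J z‖ ^ 2 := by
    simp only [sub_apply, smul_apply, innerForm_self, smul_eq_mul]
  obtain ⟨v, hv, hQv⟩ := (h.sub_innerForm l).exists_apply_self_eq_zero (u := u) hcompact
    (fun z => by rw [hQ]; linarith [hl z]) hu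
    (by simpa only [hQ, hu, one_pow, mul_one, sub_self] using hul.sub_const l)
  refine ⟨l, v, hv, ?_, hl⟩
  rw [hQ, hv] at hQv
  linarith

end IsCoerciveModulo

end Rayleigh

section Compactness

variable {V W H : Type*} [NormedAddCommGroup V] [NormedSpace ℝ V] [NormedAddCommGroup W]
  [NormedSpace ℝ W] [NormedAddCommGroup H] [NormedSpace ℝ H]

/-- Ehrling's lemma. -/
theorem exists_norm_le_mul_add_mul_of_isCompactOperator {T : V →L[ℝ] W} {S : W →L[ℝ] H}
    (hT : IsCompactOperator T) (hS : Function.Injective S) {ε : ℝ} (hε : 0 < ε) :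
    ∃ C, ∀ u, ‖T u‖ ≤ ε * ‖u‖ + C * ‖S (T u)‖ := by
  by_contra! hfail
  choose u hu using fun n : ℕ => hfail n
  have hpos (n : ℕ) : 0 < ‖T (u n)‖ := lt_of_le_of_lt (by positivity) (hu n)
  let v (n : ℕ) : V := ‖T (u n)‖⁻¹ • u n
  have hTv (n : ℕ) : ‖T (v n)‖ = 1 := by
    rw [map_smul, norm_smul, norm_inv, norm_norm, inv_mul_cancel₀ (hpos n).ne']
  have hv (n : ℕ) : ε * ‖v n‖ + n * ‖S (T (v n))‖ ≤ 1 := by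
    simp only [v, map_smul, norm_smul, norm_inv, norm_norm]
    rw [mul_left_comm, mul_left_comm (n : ℝ), ← mul_add, inv_mul_le_iff₀ (hpos n), mul_one]
    exact (hu n).le
  have hball (n : ℕ) : v n ∈ Metric.closedBall 0 ε⁻¹ := by
    rw [mem_closedBall_zero_iff, ← one_div, le_div_iff₀' hε]
    exact (le_add_of_nonneg_right (by positivity)).trans (hv n)
  have hSv : Tendsto (fun n => S (T (v n))) atTop (𝓝 0) := by
    refine squeeze_zero_norm' ?_ tendsto_one_div_atTop_nhds_zero_nat
    filter_upwards [eventually_gt_atTop 0] with n hn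
    rw [le_div_iff₀' (by positivity)]
    exact (le_add_of_nonneg_left (by positivity)).trans (hv n)
  obtain ⟨p, -, φ, hφ, hp⟩ := (hT.isCompact_closure_image_closedBall ε⁻¹).tendsto_subseq
    fun n => subset_closure ⟨v n, hball n, rfl⟩
  have hSp : S p = S 0 := by
    rw [map_zero]
    exact tendsto_nhds_unique ((S.continuous.tendsto p).comp hp) (hSv.comp hφ.tendsto_atTop)
  have hnorm : Tendsto (fun n => ‖T (v (φ n))‖) atTop (𝓝 ‖p‖) := hp.norm
  simp only [hTv, hS hSp, norm_zero] at hnorm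
  exact one_ne_zero (tendsto_nhds_unique tendsto_const_nhds hnorm)

theorem exists_norm_sq_le_mul_add_mul_of_isCompactOperator {T : V →L[ℝ] W} {S : W →L[ℝ] H}
    (hT : IsCompactOperator T) (hS : Function.Injective S) {δ : ℝ} (hδ : 0 < δ) :
    ∃ C, ∀ u, ‖T u‖ ^ 2 ≤ δ * ‖u‖ ^ 2 + C * ‖S (T u)‖ ^ 2 := by
  obtain ⟨C, hC⟩ := exists_norm_le_mul_add_mul_of_isCompactOperator hT hS
    (ε := √(δ / 2)) (by positivity)
  refine ⟨2 * C ^ 2, fun u => ?_⟩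
  calc ‖T u‖ ^ 2 ≤ (√(δ / 2) * ‖u‖ + C * ‖S (T u)‖) ^ 2 := by gcongr; exact hC u
    _ ≤ 2 * ((√(δ / 2) * ‖u‖) ^ 2 + (C * ‖S (T u)‖) ^ 2) := add_sq_le
    _ = δ * ‖u‖ ^ 2 + 2 * C ^ 2 * ‖S (T u)‖ ^ 2 := by
      rw [mul_pow, mul_pow, Real.sq_sqrt (by positivity)]
      ring

variable {X : Type*} [TopologicalSpace X] [CompactSpace X]

/-- The operator sending `u` to the function `x ↦ K x u`, for a continuous family `K` of
operators. -/
noncomputable def familyOperator (K : C(X, V →L[ℝ] W)) : V →L[ℝ] BoundedContinuousFunction X W :=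
  LinearMap.mkContinuous
    { toFun := fun u => .mkOfCompact ⟨fun x => K x u, K.continuous.clm_apply continuous_const⟩
      map_add' := fun u v => by ext x; exact map_add (K x) u v
      map_smul' := fun c u => by ext x; exact map_smul (K x) c u }
    ‖K‖ fun u => (BoundedContinuousFunction.norm_le (by positivity)).mpr fun x =>
      (K x).le_of_opNorm_le (K.norm_coe_le_norm x) u

theorem isCompactOperator_familyOperator [ProperSpace W] (K : C(X, V →L[ℝ] W)) :
    IsCompactOperator (familyOperator K) := by
  refine (isCompactOperator_iff_isCompact_closure_image_closedBall _ one_pos).mpr ?_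
  refine BoundedContinuousFunction.arzela_ascoli (Metric.closedBall 0 ‖K‖)
    (isCompact_closedBall _ _) _ ?_ fun x => Metric.equicontinuousAt_iff_right.mpr fun ε hε => ?_
  · rintro _ x ⟨u, hu, rfl⟩
    rw [mem_closedBall_zero_iff] at hu ⊢
    exact (K x).le_of_opNorm_le_of_le (K.norm_coe_le_norm x) hu |>.trans_eq (mul_one _)
  · filter_upwards [Metric.tendsto_nhds.mp (K.continuous.tendsto x) ε hε] with y hy
    rintro ⟨_, u, hu, rfl⟩
    rw [mem_closedBall_zero_iff] at hu
    calc dist (K x u) (K y u) = ‖(K y - K x) u‖ := by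
          rw [dist_comm, dist_eq_norm, sub_apply]
      _ ≤ ‖K y - K x‖ * 1 := (K y - K x).le_opNorm_of_le hu
      _ < ε := by rwa [mul_one, ← dist_eq_norm]

end Compactness

section SobolevModel

/-- Lebesgue measure on the unit interval. -/
noncomputable abbrev unitMeasure : Measure ℝ := volume.restrict (Icc (0 : ℝ) 1)

/-- Square-integrable complex functions on the unit interval. -/
noncomputable abbrev UnitL2 : Type := Lp ℂ 2 unitMeasure

/-- The Sobolev space `H¹(0, 1)`: a pair `(c, v)` encodes the function with initial value `c` and
derivative `v`. The product norm is equivalent to the Sobolev norm. -/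
abbrev UnitH1 : Type := ℂ × UnitL2

/-- Evaluation at `x ∈ [0, 1]` of the function encoded by an element of `UnitH1`. -/
noncomputable def evalAt (x : ℝ) : UnitH1 →L[ℝ] ℂ :=
  ContinuousLinearMap.fst ℝ ℂ UnitL2 +
    ((innerSL ℂ (indicatorConstLp 2 (measurableSet_Iic (a := x))
      (measure_ne_top unitMeasure _) 1)).restrictScalars ℝ).comp
      (ContinuousLinearMap.snd ℝ ℂ UnitL2)

theorem integrable_unitL2 (v : UnitL2) : Integrable v unitMeasure :=
  (Lp.memLp v).integrable one_le_two

theorem intervalIntegrable_iff_integrable_unitMeasure {E : Type*} [NormedAddCommGroup E]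
    {f : ℝ → E} : IntervalIntegrable f volume 0 1 ↔ Integrable f unitMeasure :=
  intervalIntegrable_iff_integrableOn_Icc_of_le zero_le_one

theorem evalAt_eq_add_integral {x : ℝ} (hx : x ∈ Icc (0 : ℝ) 1) (u : UnitH1) :
    evalAt x u = u.1 + ∫ s in (0 : ℝ)..x, u.2 s := by
  have hinter : Iic x ∩ Icc (0 : ℝ) 1 = Icc 0 x := by ext s; grind
  have hinner := L2.inner_indicatorConstLp_one (𝕜 := ℂ) (measurableSet_Iic (a := x))
    (measure_ne_top unitMeasure _) u.2
  rw [Measure.restrict_restrict measurableSet_Iic, hinter, integral_Icc_eq_integral_Ioc,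
    ← intervalIntegral.integral_of_le hx.1] at hinner
  rw [← hinner]
  rfl

theorem evalAt_zero (u : UnitH1) : evalAt 0 u = u.1 := by
  rw [evalAt_eq_add_integral (by simp), intervalIntegral.integral_same, add_zero]

theorem isPrimitive_evalAt (u : UnitH1) : IsPrimitive (fun x => evalAt x u) u.2 0 1 := by
  refine ⟨intervalIntegrable_iff_integrable_unitMeasure.mpr (integrable_unitL2 u.2),
    fun x hx => ?_⟩
  rw [uIcc_of_le zero_le_one] at hx
  rw [evalAt_zero, evalAt_eq_add_integral hx]

theorem evalAt_one (u : UnitH1) : evalAt 1 u = u.1 + ∫ s, u.2 s ∂unitMeasure := by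
  rw [evalAt_eq_add_integral (by simp), intervalIntegral.integral_of_le zero_le_one,
    integral_Icc_eq_integral_Ioc]

theorem continuous_evalAt : Continuous evalAt := by
  have hstep : Continuous fun x : ℝ => indicatorConstLp 2 (measurableSet_Iic (a := x))
      (measure_ne_top unitMeasure _) (1 : ℂ) := by
    refine continuous_indicatorConstLp_set (by simp) fun x => ?_
    have hlen : Tendsto (fun z : ℝ => volume (uIcc x z)) (𝓝 x) (𝓝 0) := by
      have : Continuous fun z : ℝ => ENNReal.ofReal |z - x| :=
        ENNReal.continuous_ofReal.comp (by fun_prop)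
      simpa [Real.volume_interval] using this.tendsto x
    refine tendsto_of_tendsto_of_tendsto_of_le_of_le tendsto_const_nhds hlen
      (fun _ => zero_le) fun z => (Measure.restrict_apply_le _ _).trans (measure_mono ?_)
    grind [mem_uIcc]
  have hinner : Continuous fun x : ℝ => (innerSL ℂ (indicatorConstLp 2
      (measurableSet_Iic (a := x)) (measure_ne_top unitMeasure _) (1 : ℂ))).restrictScalars ℝ :=
    (ContinuousLinearMap.restrictScalarsL ℂ UnitL2 ℂ ℝ ℝ).continuous.comp
      ((innerSL ℂ).continuous.comp hstep)
  exact continuous_const.add (hinner.clm_comp continuous_const)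

@[fun_prop]
theorem continuous_evalAt_apply (u : UnitH1) : Continuous fun x => evalAt x u :=
  continuous_evalAt.clm_apply continuous_const

/-- The embedding of `UnitH1` into the continuous functions on the unit interval. -/
noncomputable def supEmbedding : UnitH1 →L[ℝ] BoundedContinuousFunction (Icc (0 : ℝ) 1) ℂ :=
  familyOperator ⟨fun x => evalAt x, continuous_evalAt.comp continuous_subtype_val⟩

/-- The embedding of `UnitH1` into the square-integrable functions on the unit interval. -/
noncomputable def l2Embedding : UnitH1 →L[ℝ] Lp ℂ 2 (volume : Measure (Icc (0 : ℝ) 1)) :=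
  (BoundedContinuousFunction.toLp 2 volume ℝ).comp supEmbedding

theorem supEmbedding_apply (u : UnitH1) (x : Icc (0 : ℝ) 1) : supEmbedding u x = evalAt x u := rfl

theorem norm_evalAt_le_norm_supEmbedding {x : ℝ} (hx : x ∈ Icc (0 : ℝ) 1) (u : UnitH1) :
    ‖evalAt x u‖ ≤ ‖supEmbedding u‖ :=
  (supEmbedding u).norm_coe_le_norm ⟨x, hx⟩

theorem isCompactOperator_supEmbedding : IsCompactOperator supEmbedding :=
  isCompactOperator_familyOperator _

theorem isCompactOperator_l2Embedding : IsCompactOperator l2Embedding :=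
  isCompactOperator_supEmbedding.clm_comp (BoundedContinuousFunction.toLp 2 volume ℝ)

theorem toLp_unitInterval_injective : Function.Injective
    (BoundedContinuousFunction.toLp (E := ℂ) 2 (volume : Measure (Icc (0 : ℝ) 1)) ℝ) := by
  intro f g hfg
  have hae : f =ᵐ[volume] g := by
    have hf := BoundedContinuousFunction.coeFn_toLp (p := 2) (𝕜 := ℝ) volume f
    rw [hfg] at hf
    exact hf.symm.trans (BoundedContinuousFunction.coeFn_toLp (p := 2) (𝕜 := ℝ) volume g)
  have hae' : IccExtend zero_le_one f =ᵐ[unitMeasure] IccExtend zero_le_one g := by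
    refine (ae_restrict_iff_subtype measurableSet_Icc).mpr ?_
    filter_upwards [hae] with x hx
    rwa [IccExtend_val, IccExtend_val]
  ext x
  simpa only [IccExtend_val] using Measure.eqOn_Icc_of_ae_eq volume zero_ne_one hae'
    (f.continuous.Icc_extend').continuousOn (g.continuous.Icc_extend').continuousOn x.2

theorem norm_l2Embedding_sq (u : UnitH1) :
    ‖l2Embedding u‖ ^ 2 = ∫ x, ‖evalAt x u‖ ^ 2 ∂unitMeasure := by
  rw [← real_inner_self_eq_norm_sq, L2.inner_def, ← integral_subtype measurableSet_Icc]
  refine integral_congr_ae ?_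
  filter_upwards [BoundedContinuousFunction.coeFn_toLp (p := 2) (𝕜 := ℝ) volume (supEmbedding u)]
    with x hx
  rw [real_inner_self_eq_norm_sq, l2Embedding, ContinuousLinearMap.comp_apply, hx,
    supEmbedding_apply]

end SobolevModel

section Energy

/-- The form `(u, z) ↦ ∫ w ⟪u, z⟫` on `UnitH1` given by a potential `w`. -/
noncomputable def potentialForm (w : ℝ → ℝ) : UnitH1 →L[ℝ] UnitH1 →L[ℝ] ℝ :=
  ∫ x, w x • innerForm (evalAt x) ∂unitMeasure

/-- The form of the operator `-y'' + w y`. -/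
noncomputable def energyForm (w : ℝ → ℝ) : UnitH1 →L[ℝ] UnitH1 →L[ℝ] ℝ :=
  innerForm (ContinuousLinearMap.snd ℝ ℂ UnitL2) + potentialForm w

variable {w : ℝ → ℝ}

theorem integrable_smul_of_continuousOn {E : Type*} [NormedAddCommGroup E] [NormedSpace ℝ E]
    (hw : Integrable w unitMeasure) {f : ℝ → E} (hf : ContinuousOn f (Icc 0 1)) :
    Integrable (fun x => w x • f x) unitMeasure :=
  IntegrableOn.smul_continuousOn hw hf isCompact_Icc

theorem norm_integral_smul_le {E : Type*} [NormedAddCommGroup E] [NormedSpace ℝ E]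
    (hw : Integrable w unitMeasure) {f : ℝ → E} {C : ℝ} (hC : ∀ x ∈ Icc (0 : ℝ) 1, ‖f x‖ ≤ C) :
    ‖∫ x, w x • f x ∂unitMeasure‖ ≤ (∫ x, |w x| ∂unitMeasure) * C := by
  rw [← integral_mul_const]
  refine norm_integral_le_of_norm_le (hw.abs.mul_const C) ?_
  filter_upwards [ae_restrict_mem measurableSet_Icc] with x hx
  rw [norm_smul, Real.norm_eq_abs]
  gcongr
  exact hC x hx

theorem potentialForm_apply (hw : Integrable w unitMeasure) (u z : UnitH1) :
    potentialForm w u z = ∫ x, w x * ⟪evalAt x u, evalAt x z⟫ ∂unitMeasure := by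
  have hint := integrable_smul_of_continuousOn
    (E := UnitH1 →L[ℝ] UnitH1 →L[ℝ] ℝ) hw (continuous_innerForm.comp continuous_evalAt).continuousOn
  exact (congrArg (fun T => T z) (ContinuousLinearMap.integral_apply hint u)).trans
    (ContinuousLinearMap.integral_apply (hint.apply_continuousLinearMap u) z)

theorem energyForm_apply (hw : Integrable w unitMeasure) (u z : UnitH1) :
    energyForm w u z = ⟪u.2, z.2⟫ + ∫ x, w x * ⟪evalAt x u, evalAt x z⟫ ∂unitMeasure := by
  rw [energyForm, add_apply, add_apply, innerForm_apply, potentialForm_apply hw]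
  rfl

theorem energyForm_comm (hw : Integrable w unitMeasure) (u z : UnitH1) :
    energyForm w u z = energyForm w z u := by
  simp only [energyForm_apply hw, real_inner_comm]

theorem energyForm_self (hw : Integrable w unitMeasure) (u : UnitH1) :
    energyForm w u u = ‖u.2‖ ^ 2 + ∫ x, w x * ‖evalAt x u‖ ^ 2 ∂unitMeasure := by
  simp only [energyForm_apply hw, real_inner_self_eq_norm_sq]

theorem energyForm_sub_const_self (hw : Integrable w unitMeasure) (l : ℝ) (u : UnitH1) :
    energyForm (fun x => w x - l) u u = energyForm w u u - l * ‖l2Embedding u‖ ^ 2 := by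
  have hcont : Continuous fun x => ‖evalAt x u‖ ^ 2 := by fun_prop
  have hwl : Integrable (fun x => w x - l) unitMeasure := hw.sub (integrable_const l)
  have hint := integrable_smul_of_continuousOn hw hcont.continuousOn
  have hint' := integrable_smul_of_continuousOn (integrable_const l) hcont.continuousOn
  simp only [smul_eq_mul] at hint hint'
  rw [energyForm_self hw, energyForm_self hwl, norm_l2Embedding_sq,
    ← integral_const_mul, add_sub_assoc, ← integral_sub hint hint']
  simp only [sub_mul]

theorem isCoerciveModulo_energyForm (hw : Integrable w unitMeasure) :
    IsCoerciveModulo (energyForm w) l2Embedding := by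
  set N := ∫ x, |w x| ∂unitMeasure
  have hN : 0 ≤ N := integral_nonneg fun x => abs_nonneg (w x)
  obtain ⟨C, hC⟩ := exists_norm_sq_le_mul_add_mul_of_isCompactOperator
    isCompactOperator_supEmbedding toLp_unitInterval_injective (δ := 1 / (2 * (N + 1)))
    (by positivity)
  refine ⟨2, two_pos, 2 * (N + 1) * C, fun u => ?_⟩
  have hsup : (N + 1) * ‖supEmbedding u‖ ^ 2 ≤
      ‖u‖ ^ 2 / 2 + (N + 1) * C * ‖l2Embedding u‖ ^ 2 := by
    calc (N + 1) * ‖supEmbedding u‖ ^ 2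
        ≤ (N + 1) * (1 / (2 * (N + 1)) * ‖u‖ ^ 2 + C * ‖l2Embedding u‖ ^ 2) := by
          gcongr
          exact hC u
      _ = _ := by field_simp
  have hfst : ‖u.1‖ ^ 2 ≤ ‖supEmbedding u‖ ^ 2 := by
    rw [← evalAt_zero]
    gcongr
    exact norm_evalAt_le_norm_supEmbedding (by simp) u
  have hnorm : ‖u‖ ^ 2 ≤ ‖u.1‖ ^ 2 + ‖u.2‖ ^ 2 := by
    rw [Prod.norm_def]
    rcases max_choice ‖u.1‖ ‖u.2‖ with h | h <;> rw [h] <;>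
      nlinarith [sq_nonneg ‖u.1‖, sq_nonneg ‖u.2‖]
  have hpot := neg_le_of_abs_le (norm_integral_smul_le hw (f := fun x => ‖evalAt x u‖ ^ 2)
    (C := ‖supEmbedding u‖ ^ 2) fun x hx => by
      rw [norm_pow, norm_norm]
      gcongr
      exact norm_evalAt_le_norm_supEmbedding hx u)
  simp only [smul_eq_mul] at hpot
  rw [energyForm_self hw]
  linarith

end Energy

section EulerLagrange

namespace IsPrimitive

theorem inner_complex {f f' g g' : ℝ → ℂ} {a b : ℝ} (hf : IsPrimitive f f' a b)
    (hg : IsPrimitive g g' a b) :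
    IsPrimitive (fun x => ⟪f x, g x⟫) (fun x => ⟪f' x, g x⟫ + ⟪f x, g' x⟫) a b := by
  have h := ((hf.clm_apply Complex.conjCLE.toContinuousLinearMap).mul hg).clm_apply Complex.reCLM
  simpa [Complex.inner, mul_comm] using h

theorem hasDerivWithinAt {E : Type*} [NormedAddCommGroup E] [NormedSpace ℝ E] [CompleteSpace E]
    {f f' : ℝ → E} {a b : ℝ} (hf : IsPrimitive f f' a b)
    (hf' : ContinuousOn f' (Icc a b)) {x : ℝ} (hx : x ∈ Icc a b) :
    HasDerivWithinAt f (f' x) (Icc a b) x := by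
  have : Fact (x ∈ Icc a b) := ⟨hx⟩
  have hint : IntervalIntegrable f' volume a x :=
    hf.intervalIntegrable.mono_set (uIcc_subset_uIcc_left (Icc_subset_uIcc hx))
  have hmeas : StronglyMeasurableAtFilter f' (𝓝[Icc a b] x) :=
    ⟨Icc a b, self_mem_nhdsWithin, hf'.aestronglyMeasurable measurableSet_Icc⟩
  refine ((intervalIntegral.integral_hasDerivWithinAt_right hint hmeas (hf' x hx)).const_add
    (f a)).congr_of_mem (fun z hz => ?_) hx
  exact hf.eq_add_integral z (Icc_subset_uIcc hz)

end IsPrimitive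

theorem isQPEigenpair_iff_isPrimitive {q : ℝ → ℝ} {t : ℝ} {lam : ℂ} {y g h : ℝ → ℂ} :
    IsQPEigenpair q t lam y g h ↔
      (∃ x ∈ Icc (0 : ℝ) 1, y x ≠ 0) ∧ IsPrimitive y g 0 1 ∧ IsPrimitive g h 0 1 ∧
      (∀ᵐ x ∂unitMeasure, -h x + (q x : ℂ) * y x = lam * y x) ∧
      y 1 = Complex.exp (Complex.I * t) * y 0 ∧ g 1 = Complex.exp (Complex.I * t) * g 0 := by
  have huIcc : uIcc (0 : ℝ) 1 = Icc 0 1 := uIcc_of_le zero_le_one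
  constructor
  · rintro ⟨hy, hderiv, hg, hh, hgh, hode, hbc⟩
    refine ⟨hy, ⟨ContinuousOn.intervalIntegrable (by rwa [huIcc]), fun x hx => ?_⟩,
      ⟨intervalIntegrable_iff_integrable_unitMeasure.mpr hh, by rwa [huIcc]⟩, hode, hbc⟩
    rw [huIcc] at hx
    have hsub : Icc 0 x ⊆ Icc (0 : ℝ) 1 := Icc_subset_Icc_right hx.2
    rw [intervalIntegral.integral_eq_sub_of_hasDerivAt_of_le hx.1
      (fun z hz => ((hderiv z (hsub hz)).continuousWithinAt).mono hsub)
      (fun z hz => (hderiv z (hsub (Ioo_subset_Icc_self hz))).hasDerivAt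
        (Icc_mem_nhds hz.1 (hz.2.trans_le hx.2)))
      (ContinuousOn.intervalIntegrable (by rw [uIcc_of_le hx.1]; exact hg.mono hsub)),
      add_sub_cancel]
  · rintro ⟨hy, hyg, hgh, hode, hbc⟩
    have hg : ContinuousOn g (Icc 0 1) := huIcc ▸ hgh.continuousOn
    exact ⟨hy, fun x hx => hyg.hasDerivWithinAt hg hx, hg,
      intervalIntegrable_iff_integrable_unitMeasure.mp hgh.intervalIntegrable,
      huIcc ▸ hgh.eq_add_integral, hode, hbc⟩

/-- The functions in `UnitH1` with the quasi-periodic boundary condition `y 1 = exp (i t) * y 0`. -/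
noncomputable def qpSpace (t : ℝ) : Submodule ℝ UnitH1 :=
  (evalAt 1 - Complex.exp (Complex.I * t) • evalAt 0).ker

theorem mem_qpSpace {t : ℝ} {u : UnitH1} :
    u ∈ qpSpace t ↔ evalAt 1 u = Complex.exp (Complex.I * t) * evalAt 0 u := by
  rw [qpSpace, LinearMap.mem_ker]
  exact sub_eq_zero

theorem isClosed_qpSpace (t : ℝ) : IsClosed (qpSpace t : Set UnitH1) :=
  ContinuousLinearMap.isClosed_ker _

theorem inner_const_unitL2 (c : ℂ) (v : UnitL2) :
    ⟪(Lp.const 2 unitMeasure c : UnitL2), v⟫ = ⟪c, ∫ x, v x ∂unitMeasure⟫ := by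
  rw [L2.inner_def, ← integral_inner (integrable_unitL2 v)]
  refine integral_congr_ae ?_
  filter_upwards [Lp.coeFn_const (p := 2) (μ := unitMeasure) (c := c)] with x hx
  rw [hx, Function.const_apply]

theorem integral_const_unitL2 (c : ℂ) :
    ∫ x, (Lp.const 2 unitMeasure c : UnitL2) x ∂unitMeasure = c := by
  rw [integral_congr_ae (Lp.coeFn_const (p := 2) (μ := unitMeasure) (c := c))]
  simp

theorem exists_eq_const_of_inner_eq_zero {p : UnitL2}
    (hp : ∀ v : UnitL2, ∫ x, v x ∂unitMeasure = 0 → ⟪p, v⟫ = 0) :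
    ∃ c, p = Lp.const 2 unitMeasure c := by
  set c := ∫ x, p x ∂unitMeasure
  refine ⟨c, sub_eq_zero.mp ?_⟩
  have hmean : ∫ x, (p - Lp.const 2 unitMeasure c : UnitL2) x ∂unitMeasure = 0 := by
    rw [integral_congr_ae (Lp.coeFn_sub _ _)]
    simp only [Pi.sub_apply]
    rw [integral_sub (integrable_unitL2 _) (integrable_unitL2 _), integral_const_unitL2, sub_self]
  rw [← inner_self_eq_zero (𝕜 := ℝ), inner_sub_left, hp _ hmean, inner_const_unitL2, hmean,
    inner_zero_right, sub_zero]

theorem memLp_of_continuousOn {f : ℝ → ℂ} (hf : ContinuousOn f (Icc 0 1)) :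
    MemLp f 2 unitMeasure := by
  obtain ⟨C, hC⟩ := isCompact_Icc.exists_bound_of_continuousOn hf
  exact MemLp.of_bound (hf.aestronglyMeasurable measurableSet_Icc) C
    ((ae_restrict_iff' measurableSet_Icc).mpr (.of_forall hC))

theorem energyForm_eq_inner_add_inner {w : ℝ → ℝ} (hw : Integrable w unitMeasure) (u z : UnitH1)
    {F : ℝ → ℂ} (hF : IsPrimitive F (fun x => w x • evalAt x u) 0 1) (hF₀ : F 0 = 0)
    {F₂ : UnitL2} (hF₂ : F₂ =ᵐ[unitMeasure] F) :
    energyForm w u z = ⟪u.2 - F₂, z.2⟫ + ⟪F 1, evalAt 1 z⟫ := by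
  have hpot : Integrable (fun x => ⟪w x • evalAt x u, evalAt x z⟫) unitMeasure := by
    simp only [real_inner_smul_left]
    exact integrable_smul_of_continuousOn hw (by fun_prop)
  have hFz : (fun x => ⟪F₂ x, z.2 x⟫) =ᵐ[unitMeasure] fun x => ⟪F x, z.2 x⟫ := by
    filter_upwards [hF₂] with x hx
    rw [hx]
  have hparts := (hF.inner_complex (isPrimitive_evalAt z)).eq_add_integral 1 right_mem_uIcc
  rw [hF₀, inner_zero_left, zero_add, intervalIntegral.integral_of_le zero_le_one,
    ← integral_Icc_eq_integral_Ioc,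
    integral_add hpot ((L2.integrable_inner F₂ z.2).congr hFz)] at hparts
  rw [energyForm_apply hw, inner_sub_left, L2.inner_def F₂, integral_congr_ae hFz, hparts]
  simp only [real_inner_smul_left]
  ring

theorem exists_quasiPeriodic_eq_add_primitive {w : ℝ → ℝ} (hw : Integrable w unitMeasure) {t : ℝ}
    {u : UnitH1} (hweak : ∀ z ∈ qpSpace t, energyForm w u z = 0)
    {F : ℝ → ℂ} (hF : IsPrimitive F (fun x => w x • evalAt x u) 0 1) (hF₀ : F 0 = 0) :
    ∃ c, (∀ᵐ x ∂unitMeasure, u.2 x = c + F x) ∧ c + F 1 = Complex.exp (Complex.I * t) * c := by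
  set θ := Complex.exp (Complex.I * t)
  have hθ : θ * conj θ = 1 := by
    rw [Complex.mul_conj', Complex.norm_exp_I_mul_ofReal, Complex.ofReal_one, one_pow]
  have hF₂ := (memLp_of_continuousOn (uIcc_of_le zero_le_one (α := ℝ) ▸ hF.continuousOn)).coeFn_toLp
  set F₂ := (memLp_of_continuousOn (uIcc_of_le zero_le_one (α := ℝ) ▸ hF.continuousOn)).toLp
  have hform (z : UnitH1) (hz : evalAt 1 z = θ * z.1) :
      ⟪u.2 - F₂, z.2⟫ + ⟪F 1, evalAt 1 z⟫ = 0 := by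
    rw [← energyForm_eq_inner_add_inner hw u z hF hF₀ hF₂, hweak z]
    rwa [mem_qpSpace, evalAt_zero]
  obtain ⟨c, hc⟩ : ∃ c, u.2 - F₂ = Lp.const 2 unitMeasure c := by
    refine exists_eq_const_of_inner_eq_zero fun v hv => ?_
    have hv₁ : evalAt 1 (0, v) = 0 := by rw [evalAt_one, hv, add_zero]
    simpa [hv₁] using hform (0, v) (by simp [hv₁])
  refine ⟨c, ?_, ?_⟩
  · filter_upwards [Lp.coeFn_sub u.2 F₂, hF₂,
      Lp.coeFn_const (p := 2) (μ := unitMeasure) (c := c)] with x hsub hx hcx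
    rw [hc, hcx, Pi.sub_apply, hx] at hsub
    exact sub_eq_iff_eq_add.mp hsub.symm
  · have hbdry (X : ℂ) : ⟪c, (θ - 1) * X⟫ + ⟪F 1, θ * X⟫ = 0 := by
      have h₁ : evalAt 1 (X, Lp.const 2 unitMeasure ((θ - 1) * X)) = θ * X := by
        rw [evalAt_one, integral_const_unitL2]
        ring
      simpa only [hc, h₁, inner_const_unitL2, integral_const_unitL2] using hform _ h₁
    have hzero : conj θ * (c + F 1) - c = 0 := by
      refine inner_self_eq_zero (𝕜 := ℝ).mp ?_
      rw [← hbdry (conj θ * (c + F 1) - c)]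
      simp only [Complex.inner, ← Complex.add_re, map_sub, map_mul, map_add, Complex.conj_conj]
      ring_nf
    linear_combination θ * hzero - (c + F 1) * hθ

theorem isQPEigenpair_of_energyForm_eq_zero {q : ℝ → ℝ} (hq : Integrable q unitMeasure) {t l : ℝ}
    {u : UnitH1} (hu : u ∈ qpSpace t) (hne : l2Embedding u ≠ 0)
    (hweak : ∀ z ∈ qpSpace t, energyForm (fun x => q x - l) u z = 0) :
    ∃ g, IsQPEigenpair q t l (fun x => evalAt x u) g (fun x => (q x - l) • evalAt x u) := by
  have hP : Integrable (fun x => (q x - l) • evalAt x u) unitMeasure :=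
    integrable_smul_of_continuousOn (hq.sub (integrable_const l)) (by fun_prop)
  set F : ℝ → ℂ := fun x => ∫ s in (0 : ℝ)..x, (q s - l) • evalAt s u
  have hF₀ : F 0 = 0 := intervalIntegral.integral_same
  have hF : IsPrimitive F (fun x => (q x - l) • evalAt x u) 0 1 :=
    ⟨intervalIntegrable_iff_integrable_unitMeasure.mpr hP, fun x _ => by rw [hF₀, zero_add]⟩
  obtain ⟨c, hc, hc₁⟩ := exists_quasiPeriodic_eq_add_primitive
    (hq.sub (integrable_const l)) hweak hF hF₀
  refine ⟨fun x => c + F x, isQPEigenpair_iff_isPrimitive.mpr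
    ⟨?_, ?_, ?_, ?_, mem_qpSpace.mp hu, ?_⟩⟩
  · by_contra! hzero
    apply hne
    rw [← norm_eq_zero, ← sq_eq_zero_iff, norm_l2Embedding_sq]
    refine setIntegral_eq_zero_of_forall_eq_zero fun x hx => ?_
    rw [hzero x hx, norm_zero, zero_pow two_ne_zero]
  · refine (isPrimitive_evalAt u).congr_deriv_ae (ae_restrict_of_ae_restrict_of_subset ?_ hc)
    exact uIoc_subset_uIcc.trans_eq (uIcc_of_le zero_le_one)
  · exact ⟨hF.intervalIntegrable, fun x hx => by rw [hF.eq_add_integral x hx, add_assoc]⟩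
  · refine .of_forall fun x => ?_
    rw [Complex.real_smul]
    push_cast
    ring
  · rw [hc₁, hF₀, add_zero]

theorem isQPEigenpair_of_energyForm_self_eq {q : ℝ → ℝ} (hq : Integrable q unitMeasure) {t l : ℝ}
    (hlow : ∀ z ∈ qpSpace t, l * ‖l2Embedding z‖ ^ 2 ≤ energyForm q z z)
    {u : UnitH1} (hu : u ∈ qpSpace t) (hne : l2Embedding u ≠ 0)
    (heq : energyForm q u u = l * ‖l2Embedding u‖ ^ 2) :
    ∃ g, IsQPEigenpair q t l (fun x => evalAt x u) g (fun x => (q x - l) • evalAt x u) := by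
  have hq' : Integrable (fun x => q x - l) unitMeasure := hq.sub (integrable_const l)
  set K := (qpSpace t).subtypeL
  set B := (energyForm fun x => q x - l).bilinearComp K K
  have hB (z : qpSpace t) : 0 ≤ B z z :=
    (sub_nonneg.mpr (hlow z z.2)).trans_eq (energyForm_sub_const_self hq l z).symm
  have hBu : B ⟨u, hu⟩ ⟨u, hu⟩ = 0 :=
    (energyForm_sub_const_self hq l u).trans (sub_eq_zero.mpr heq)
  exact isQPEigenpair_of_energyForm_eq_zero hq hu hne fun z hz =>
    apply_eq_zero_of_apply_self_eq_zero hB (fun _ _ => energyForm_comm hq' _ _) hBu ⟨z, hz⟩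

theorem exists_lowest_eigenvalue {q : ℝ → ℝ} (hq : Integrable q unitMeasure) {t : ℝ}
    (hne : ∃ z ∈ qpSpace t, l2Embedding z ≠ 0) :
    ∃ l : ℝ, IsQPEigenvalue q t l ∧
      ∀ z ∈ qpSpace t, l * ‖l2Embedding z‖ ^ 2 ≤ energyForm q z z := by
  have : CompleteSpace (qpSpace t) := (isClosed_qpSpace t).completeSpace_coe
  obtain ⟨z₀, hz₀, hJz₀⟩ := hne
  set K := (qpSpace t).subtypeL
  have hcoercive : IsCoerciveModulo ((energyForm q).bilinearComp K K) (l2Embedding.comp K) := by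
    obtain ⟨C₁, hC₁, C₂, h⟩ := isCoerciveModulo_energyForm hq
    exact ⟨C₁, hC₁, C₂, fun u => h u⟩
  obtain ⟨l, u, hu, hul, hlow⟩ := hcoercive.exists_minimizer
    (isCompactOperator_l2Embedding.comp_clm K) ⟨⟨z₀, hz₀⟩, hJz₀⟩
  have hu' : ‖l2Embedding u‖ = 1 := hu
  have hne : l2Embedding u ≠ 0 := norm_ne_zero_iff.mp (hu'.trans_ne one_ne_zero)
  obtain ⟨g, hpair⟩ := isQPEigenpair_of_energyForm_self_eq hq (fun z hz => hlow ⟨z, hz⟩) u.2 hne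
    (by rw [hu', one_pow, mul_one]; exact hul)
  exact ⟨l, ⟨_, g, _, hpair⟩, fun z hz => hlow ⟨z, hz⟩⟩

end EulerLagrange

section PlaneWave

open Complex (exp I)

/-- The plane wave `x ↦ exp (i k x)`. -/
noncomputable def wave (k x : ℝ) : ℂ := exp (I * k * x)

theorem wave_zero_right (k : ℝ) : wave k 0 = 1 := by
  rw [wave, Complex.ofReal_zero, mul_zero, Complex.exp_zero]

theorem wave_mul_wave (k l x : ℝ) : wave k x * wave l x = wave (k + l) x := by
  rw [wave, wave, wave, ← Complex.exp_add]
  push_cast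
  ring_nf

theorem wave_mul_wave_neg (k x : ℝ) : wave k x * wave (-k) x = 1 := by
  rw [wave_mul_wave, add_neg_cancel, wave, Complex.ofReal_zero, mul_zero, zero_mul,
    Complex.exp_zero]

theorem conj_wave (k x : ℝ) : conj (wave k x) = wave (-k) x := by
  simp only [wave, ← Complex.exp_conj, map_mul, Complex.conj_I, Complex.conj_ofReal,
    Complex.ofReal_neg, neg_mul, mul_neg]

theorem norm_wave (k x : ℝ) : ‖wave k x‖ = 1 := by
  rw [wave, mul_assoc, ← Complex.ofReal_mul, Complex.norm_exp_I_mul_ofReal]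

@[fun_prop]
theorem continuous_wave (k : ℝ) : Continuous (wave k) := by
  unfold wave
  fun_prop

theorem isPrimitive_wave (k x₀ x₁ : ℝ) :
    IsPrimitive (wave k) (fun x => I * k * wave k x) x₀ x₁ := by
  refine .of_hasDerivAt (fun x _ => ?_) (by fun_prop)
  have hlin : HasDerivAt (fun x : ℝ => I * k * x) (I * k * 1) x :=
    Complex.ofRealCLM.hasDerivAt.const_mul (I * k)
  exact hlin.cexp.congr_deriv (by rw [mul_one, mul_comm, wave])

end PlaneWave

section TestFunction

open Complex (exp I)

theorem exists_mem_qpSpace_evalAt_eq_wave {t k : ℝ} (hk : wave k 1 = exp (I * t)) :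
    ∃ u ∈ qpSpace t, (∀ x ∈ Icc (0 : ℝ) 1, evalAt x u = wave k x) ∧ ‖u.2‖ ^ 2 = k ^ 2 := by
  have hderiv : MemLp (fun x => I * k * wave k x) 2 unitMeasure :=
    memLp_of_continuousOn (by fun_prop)
  have heval : ∀ x ∈ Icc (0 : ℝ) 1, evalAt x (1, hderiv.toLp) = wave k x := by
    intro x hx
    have hprim : IsPrimitive (wave k) hderiv.toLp 0 1 :=
      (isPrimitive_wave k 0 1).congr_deriv_ae (ae_restrict_of_ae_restrict_of_subset
        (uIoc_subset_uIcc.trans_eq (uIcc_of_le zero_le_one)) hderiv.coeFn_toLp.symm)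
    rw [evalAt_eq_add_integral hx, hprim.eq_add_integral x (Icc_subset_uIcc hx)]
    simp only [wave_zero_right]
  refine ⟨(1, hderiv.toLp), ?_, heval, ?_⟩
  · rw [mem_qpSpace, heval 1 (by simp), evalAt_zero, mul_one, hk]
  · have hnorm : (fun x => ⟪hderiv.toLp _ x, hderiv.toLp _ x⟫) =ᵐ[unitMeasure] fun _ => k ^ 2 := by
      filter_upwards [hderiv.coeFn_toLp] with x hx
      rw [hx, real_inner_self_eq_norm_sq, norm_mul, norm_wave, norm_mul, Complex.norm_I,
        Complex.norm_real, Real.norm_eq_abs, one_mul, mul_one, sq_abs]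
    rw [← real_inner_self_eq_norm_sq, L2.inner_def, integral_congr_ae hnorm]
    simp

theorem ae_eq_zero_of_isQPEigenpair_wave {q : ℝ → ℝ} {t k : ℝ} {y g h : ℝ → ℂ}
    (hpair : IsQPEigenpair q t ((k ^ 2 : ℝ) : ℂ) y g h)
    (hy : ∀ x ∈ Icc (0 : ℝ) 1, y x = wave k x) : ∀ᵐ x ∂unitMeasure, q x = 0 := by
  obtain ⟨-, -, hgh, hode, -⟩ := isQPEigenpair_iff_isPrimitive.mp hpair
  have hg : EqOn g (fun x => I * k * wave k x) (uIcc 0 1) := by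
    intro x hx
    rw [uIcc_of_le zero_le_one] at hx
    have hwave := (isPrimitive_wave k 0 1).hasDerivWithinAt (by fun_prop) hx
    exact (uniqueDiffOn_Icc zero_lt_one x hx).eq_deriv _ (hpair.2.1 x hx) (hwave.congr_of_mem hy hx)
  have hwave' := (isPrimitive_wave k 0 1).clm_apply (ContinuousLinearMap.mul ℝ ℂ (I * k))
  filter_upwards [hode, ae_restrict_of_ae (hgh.ae_eq hwave' hg), ae_restrict_mem measurableSet_Icc]
    with x hode hh hx
  rw [hh (Icc_subset_uIcc hx), hy x hx] at hode
  simp only [ContinuousLinearMap.mul_apply'] at hode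
  push_cast at hode
  have hqwave : (q x : ℂ) * wave k x = 0 := by
    linear_combination hode + k ^ 2 * wave k x * Complex.I_sq
  exact Complex.ofReal_eq_zero.mp ((mul_eq_zero.mp hqwave).resolve_right
    (left_ne_zero_of_mul_eq_one (wave_mul_wave_neg k x)))

theorem norm_l2Embedding_of_evalAt_eq_wave {k : ℝ} {u : UnitH1}
    (heval : ∀ x ∈ Icc (0 : ℝ) 1, evalAt x u = wave k x) : ‖l2Embedding u‖ ^ 2 = 1 := by
  have hnorm : (fun x => ‖evalAt x u‖ ^ 2) =ᵐ[unitMeasure] fun _ => 1 := by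
    filter_upwards [ae_restrict_mem measurableSet_Icc] with x hx
    rw [heval x hx, norm_wave, one_pow]
  rw [norm_l2Embedding_sq, integral_congr_ae hnorm]
  simp

theorem energyForm_self_of_evalAt_eq_wave {q : ℝ → ℝ} (hq : Integrable q unitMeasure) {k : ℝ}
    {u : UnitH1} (heval : ∀ x ∈ Icc (0 : ℝ) 1, evalAt x u = wave k x) :
    energyForm q u u = ‖u.2‖ ^ 2 + ∫ x, q x ∂unitMeasure := by
  have hpot : (fun x => q x * ‖evalAt x u‖ ^ 2) =ᵐ[unitMeasure] q := by
    filter_upwards [ae_restrict_mem measurableSet_Icc] with x hx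
    rw [heval x hx, norm_wave, one_pow, mul_one]
  rw [energyForm_self hq, integral_congr_ae hpot]

theorem ae_eq_zero_of_forall_sq_le_eigenvalue {q : ℝ → ℝ} (hq : Integrable q unitMeasure)
    (hmean : ∫ x, q x ∂unitMeasure = 0) {t : ℝ}
    (hlow : ∀ l : ℝ, IsQPEigenvalue q t l → ∃ k, wave k 1 = exp (I * t) ∧ k ^ 2 ≤ l) :
    ∀ᵐ x ∂unitMeasure, q x = 0 := by
  have hne {k : ℝ} {u} (heval : ∀ x ∈ Icc (0 : ℝ) 1, evalAt x u = wave k x) :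
      l2Embedding u ≠ 0 := by
    intro hu
    simpa [hu] using norm_l2Embedding_of_evalAt_eq_wave heval
  obtain ⟨u, hu, hueval, -⟩ := exists_mem_qpSpace_evalAt_eq_wave (t := t) (k := t) (by simp [wave])
  obtain ⟨l, hl, hminimal⟩ := exists_lowest_eigenvalue hq ⟨u, hu, hne hueval⟩
  obtain ⟨k, hk, hkl⟩ := hlow l hl
  obtain ⟨φ, hφ, heval, hderiv⟩ := exists_mem_qpSpace_evalAt_eq_wave hk
  have henergy : energyForm q φ φ = k ^ 2 * ‖l2Embedding φ‖ ^ 2 := by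
    rw [energyForm_self_of_evalAt_eq_wave hq heval, hmean, hderiv,
      norm_l2Embedding_of_evalAt_eq_wave heval, add_zero, mul_one]
  obtain ⟨g, hpair⟩ := isQPEigenpair_of_energyForm_self_eq hq
    (fun z hz => (mul_le_mul_of_nonneg_right hkl (sq_nonneg _)).trans (hminimal z hz))
    hφ (hne heval) henergy
  exact ae_eq_zero_of_isQPEigenpair_wave hpair heval

end TestFunction

section MeanValue

open Complex (exp I)

/-- The coefficient of `wave k` when `y` and its derivative `g` are expanded in `wave k` and
`wave (-k)` by variation of constants, scaled by `2 i k`. -/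
noncomputable def amplitude (k : ℝ) (y g : ℝ → ℂ) (x : ℝ) : ℂ :=
  (g x + I * k * y x) * wave (-k) x

theorem two_mul_eq_amplitude_sub_amplitude (k : ℝ) (y g : ℝ → ℂ) (x : ℝ) :
    2 * (I * k) * y x = amplitude k y g x * wave k x - amplitude (-k) y g x * wave (-k) x := by
  simp only [amplitude, neg_neg, Complex.ofReal_neg]
  linear_combination (-2 * (I * k) * y x) * wave_mul_wave_neg k x

variable {q : ℝ → ℝ} {t k : ℝ} {y g h : ℝ → ℂ}

theorem amplitude_one {lam : ℂ} (hpair : IsQPEigenpair q t lam y g h) (l : ℝ) :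
    amplitude l y g 1 = exp (I * t) * wave (-l) 1 * amplitude l y g 0 := by
  obtain ⟨-, -, -, -, hy, hg⟩ := isQPEigenpair_iff_isPrimitive.mp hpair
  rw [amplitude, amplitude, hy, hg, wave_zero_right]
  ring

theorem isPrimitive_amplitude (hpair : IsQPEigenpair q t ((k ^ 2 : ℝ) : ℂ) y g h) :
    IsPrimitive (amplitude k y g) (fun x => q x • (y x * wave (-k) x)) 0 1 := by
  obtain ⟨-, hyg, hgh, hode, -⟩ := isQPEigenpair_iff_isPrimitive.mp hpair
  refine ((hgh.add (hyg.clm_apply (ContinuousLinearMap.mul ℝ ℂ (I * k)))).mul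
    (isPrimitive_wave (-k) 0 1)).congr_deriv_ae (ae_restrict_of_ae_restrict_of_subset
      (uIoc_subset_uIcc.trans_eq (uIcc_of_le zero_le_one)) ?_)
  filter_upwards [hode] with x hx
  simp only [ContinuousLinearMap.mul_apply', Complex.real_smul, Complex.ofReal_neg]
  push_cast at hx
  linear_combination (-wave (-k) x) * hx - k ^ 2 * y x * wave (-k) x * Complex.I_sq

theorem integral_smul_mul_wave_neg (hpair : IsQPEigenpair q t ((k ^ 2 : ℝ) : ℂ) y g h) :
    ∫ x, q x • (y x * wave (-k) x) ∂unitMeasure =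
      (exp (I * t) * wave (-k) 1 - 1) * amplitude k y g 0 := by
  have h₁ := (isPrimitive_amplitude hpair).eq_add_integral 1 right_mem_uIcc
  rw [amplitude_one hpair, intervalIntegral.integral_of_le zero_le_one,
    ← integral_Icc_eq_integral_Ioc] at h₁
  linear_combination -h₁

theorem norm_intervalIntegral_smul_le {E : Type*} [NormedAddCommGroup E] [NormedSpace ℝ E]
    (hq : Integrable q unitMeasure) {f : ℝ → E} {C : ℝ} (hC : ∀ x ∈ Icc (0 : ℝ) 1, ‖f x‖ ≤ C)
    {x : ℝ} (hx : x ∈ Icc (0 : ℝ) 1) :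
    ‖∫ s in (0 : ℝ)..x, q s • f s‖ ≤ (∫ x, |q x| ∂unitMeasure) * C := by
  have hint : ∫ s in (0 : ℝ)..x, q s • f s =
      ∫ s, q s • (Ioc 0 x).indicator f s ∂unitMeasure := by
    simp only [← indicator_smul_apply]
    rw [integral_indicator measurableSet_Ioc, Measure.restrict_restrict measurableSet_Ioc,
      inter_eq_left.mpr (Ioc_subset_Icc_self.trans (Icc_subset_Icc_right hx.2)),
      intervalIntegral.integral_of_le hx.1]
  rw [hint]
  exact norm_integral_smul_le hq fun s hs => norm_indicator_le_norm_self f s |>.trans (hC s hs)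

theorem norm_amplitude_sub_le (hq : Integrable q unitMeasure)
    (hpair : IsQPEigenpair q t ((k ^ 2 : ℝ) : ℂ) y g h) {M : ℝ}
    (hM : ∀ x ∈ Icc (0 : ℝ) 1, ‖y x‖ ≤ M) {x : ℝ} (hx : x ∈ Icc (0 : ℝ) 1) :
    ‖amplitude k y g x - amplitude k y g 0‖ ≤ (∫ x, |q x| ∂unitMeasure) * M := by
  rw [(isPrimitive_amplitude hpair).eq_add_integral x (Icc_subset_uIcc hx), add_sub_cancel_left]
  refine norm_intervalIntegral_smul_le hq (fun s hs => ?_) hx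
  rw [norm_mul, norm_wave, mul_one]
  exact hM s hs

theorem norm_integral_smul_sub_le (hq : Integrable q unitMeasure) {f₁ f₂ : ℝ → ℂ}
    (hf₁ : ContinuousOn f₁ (Icc 0 1)) (hf₂ : ContinuousOn f₂ (Icc 0 1)) {D : ℝ}
    (hD : ∀ x ∈ Icc (0 : ℝ) 1, ‖f₁ x - f₂ x‖ ≤ D) :
    ‖∫ x, q x • f₁ x ∂unitMeasure - ∫ x, q x • f₂ x ∂unitMeasure‖ ≤
      (∫ x, |q x| ∂unitMeasure) * D := by
  rw [← integral_sub (integrable_smul_of_continuousOn hq hf₁)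
    (integrable_smul_of_continuousOn hq hf₂)]
  simp only [← smul_sub]
  exact norm_integral_smul_le hq hD

theorem continuousOn_amplitude (hpair : IsQPEigenpair q t ((k ^ 2 : ℝ) : ℂ) y g h) :
    ContinuousOn (amplitude k y g) (Icc 0 1) :=
  uIcc_of_le zero_le_one (α := ℝ) ▸ (isPrimitive_amplitude hpair).continuousOn

theorem integral_smul_amplitude_of_orthogonal (hq : Integrable q unitMeasure)
    (hpair : IsQPEigenpair q t ((k ^ 2 : ℝ) : ℂ) y g h)
    (horth : ∫ x, q x • (y x * wave (-k) x) ∂unitMeasure = 0) :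
    ∫ x, q x • amplitude k y g x ∂unitMeasure =
      ∫ x, q x • (amplitude (-k) y g x * wave (-(2 * k)) x) ∂unitMeasure := by
  have hA := continuousOn_amplitude hpair
  have hB := continuousOn_amplitude (k := -k) (neg_sq k ▸ hpair)
  rw [← sub_eq_zero, ← integral_sub (integrable_smul_of_continuousOn hq hA)
    (integrable_smul_of_continuousOn hq (by fun_prop)), ← mul_zero (2 * (I * k)), ← horth,
    ← integral_const_mul]
  congr 1 with x
  have hwave : wave (-k) x * wave (-k) x = wave (-(2 * k)) x := by rw [wave_mul_wave]; ring_nf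
  simp only [Complex.real_smul]
  linear_combination (-q x * wave (-k) x) * two_mul_eq_amplitude_sub_amplitude k y g x -
    q x * amplitude k y g x * wave_mul_wave_neg k x + q x * amplitude (-k) y g x * hwave

theorem norm_amplitude_mul_abs_mean_le_of_orthogonal (hq : Integrable q unitMeasure)
    (hpair : IsQPEigenpair q t ((k ^ 2 : ℝ) : ℂ) y g h) {M : ℝ}
    (hM : ∀ x ∈ Icc (0 : ℝ) 1, ‖y x‖ ≤ M)
    (horth : ∫ x, q x • (y x * wave (-k) x) ∂unitMeasure = 0) :
    ‖amplitude k y g 0‖ * |∫ x, q x ∂unitMeasure| ≤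
      ‖amplitude (-k) y g 0‖ * ‖∫ x, q x • wave (-(2 * k)) x ∂unitMeasure‖ +
        2 * (∫ x, |q x| ∂unitMeasure) ^ 2 * M := by
  have hpair' : IsQPEigenpair q t (((-k) ^ 2 : ℝ) : ℂ) y g h := by rwa [neg_sq]
  have hB := continuousOn_amplitude hpair'
  set A := amplitude k y g
  set B := amplitude (-k) y g
  set R := ∫ x, q x • wave (-(2 * k)) x ∂unitMeasure
  set J := ∫ x, q x • (B x * wave (-(2 * k)) x) ∂unitMeasure
  have hJ : ∫ x, q x • A x ∂unitMeasure = J :=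
    integral_smul_amplitude_of_orthogonal hq hpair horth
  have hAJ : ‖(∫ x, q x ∂unitMeasure) • A 0 - J‖ ≤
      (∫ x, |q x| ∂unitMeasure) * ((∫ x, |q x| ∂unitMeasure) * M) := by
    rw [← integral_smul_const, norm_sub_rev, ← hJ]
    exact norm_integral_smul_sub_le hq (continuousOn_amplitude hpair) continuousOn_const
      fun x hx => norm_amplitude_sub_le hq hpair hM hx
  have hJR : ‖J - B 0 * R‖ ≤ (∫ x, |q x| ∂unitMeasure) * ((∫ x, |q x| ∂unitMeasure) * M) := by
    rw [← integral_const_mul]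
    simp only [mul_smul_comm]
    refine norm_integral_smul_sub_le hq (by fun_prop) (by fun_prop) fun x hx => ?_
    rw [← sub_mul, norm_mul, norm_wave, mul_one]
    exact norm_amplitude_sub_le hq hpair' hM hx
  have htri := norm_le_norm_add_norm_sub' ((∫ x, q x ∂unitMeasure) • A 0) (B 0 * R)
  have htri' := norm_sub_le_norm_sub_add_norm_sub ((∫ x, q x ∂unitMeasure) • A 0) J (B 0 * R)
  rw [norm_smul, Real.norm_eq_abs, norm_mul] at htri
  linarith

theorem abs_mul_norm_le_norm_amplitude_add (hq : Integrable q unitMeasure)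
    (hpair : IsQPEigenpair q t ((k ^ 2 : ℝ) : ℂ) y g h)
    (hk : 2 * ∫ x, |q x| ∂unitMeasure ≤ |k|) {x₀ : ℝ} (hx₀ : x₀ ∈ Icc (0 : ℝ) 1)
    (hmax : ∀ x ∈ Icc (0 : ℝ) 1, ‖y x‖ ≤ ‖y x₀‖) :
    |k| * ‖y x₀‖ ≤ ‖amplitude k y g 0‖ + ‖amplitude (-k) y g 0‖ := by
  have hpair' : IsQPEigenpair q t (((-k) ^ 2 : ℝ) : ℂ) y g h := by rwa [neg_sq]
  have hA := (norm_sub_norm_le _ _).trans (norm_amplitude_sub_le hq hpair hmax hx₀)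
  have hB := (norm_sub_norm_le _ _).trans (norm_amplitude_sub_le hq hpair' hmax hx₀)
  have hsplit : 2 * |k| * ‖y x₀‖ ≤ ‖amplitude k y g x₀‖ + ‖amplitude (-k) y g x₀‖ := by
    have h₁ := norm_sub_le (amplitude k y g x₀ * wave k x₀) (amplitude (-k) y g x₀ * wave (-k) x₀)
    rw [← two_mul_eq_amplitude_sub_amplitude] at h₁
    simpa only [norm_mul, norm_wave, Complex.norm_I, Complex.norm_real, Complex.norm_ofNat,
      Real.norm_eq_abs, one_mul, mul_one] using h₁
  linarith [mul_le_mul_of_nonneg_right hk (norm_nonneg (y x₀))]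

theorem norm_integral_smul_wave_neg (q : ℝ → ℝ) (k : ℝ) :
    ‖∫ x, q x • wave (-k) x ∂unitMeasure‖ = ‖∫ x, q x • wave k x ∂unitMeasure‖ := by
  rw [← Complex.norm_conj, ← integral_conj]
  simp only [RCLike.conj_smul, conj_wave, neg_neg]

theorem norm_amplitude_mul_abs_mean_le (hq : Integrable q unitMeasure)
    (hpair : IsQPEigenpair q t ((k ^ 2 : ℝ) : ℂ) y g h) (hk : wave k 1 = exp (I * t)) {M : ℝ}
    (hM : ∀ x ∈ Icc (0 : ℝ) 1, ‖y x‖ ≤ M) :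
    ‖amplitude k y g 0‖ * |∫ x, q x ∂unitMeasure| ≤
      ‖amplitude (-k) y g 0‖ * ‖∫ x, q x • wave (2 * k) x ∂unitMeasure‖ +
        2 * (∫ x, |q x| ∂unitMeasure) ^ 2 * M := by
  rw [← norm_integral_smul_wave_neg]
  refine norm_amplitude_mul_abs_mean_le_of_orthogonal hq hpair hM ?_
  rw [integral_smul_mul_wave_neg hpair, ← hk, wave_mul_wave_neg, sub_self, zero_mul]

/-- If `exp (2 i t) = 1`, the quotient takes the junk value `m / 0 = 0`; the bound persists because
`wave (-k)` is then quasi-periodic as well. -/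
theorem norm_amplitude_neg_mul_abs_mean_le (hq : Integrable q unitMeasure)
    (hpair : IsQPEigenpair q t ((k ^ 2 : ℝ) : ℂ) y g h) (hk : wave k 1 = exp (I * t)) {M : ℝ}
    (hM : ∀ x ∈ Icc (0 : ℝ) 1, ‖y x‖ ≤ M) :
    ‖amplitude (-k) y g 0‖ * |∫ x, q x ∂unitMeasure| ≤
      ‖amplitude k y g 0‖ * ‖∫ x, q x • wave (2 * k) x ∂unitMeasure‖ +
        (2 * (∫ x, |q x| ∂unitMeasure) ^ 2 + (∫ x, |q x| ∂unitMeasure) *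
          (|∫ x, q x ∂unitMeasure| / ‖exp (I * t) ^ 2 - 1‖)) * M := by
  set N := ∫ x, |q x| ∂unitMeasure
  set m := |∫ x, q x ∂unitMeasure|
  have hpair' : IsQPEigenpair q t (((-k) ^ 2 : ℝ) : ℂ) y g h := by rwa [neg_sq]
  by_cases hθ : exp (I * t) ^ 2 = 1
  · have hk' : wave (-k) 1 = exp (I * t) := by
      linear_combination (exp (I * t)) * wave_mul_wave_neg k 1 - wave (-k) 1 * hθ -
        exp (I * t) * wave (-k) 1 * hk
    have hbound := norm_amplitude_mul_abs_mean_le hq hpair' hk' hM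
    rw [neg_neg, mul_neg, norm_integral_smul_wave_neg] at hbound
    rwa [hθ, sub_self, norm_zero, div_zero, mul_zero, add_zero]
  · have hd : 0 < ‖exp (I * t) ^ 2 - 1‖ := norm_pos_iff.mpr (sub_ne_zero.mpr hθ)
    have hamp : ‖exp (I * t) ^ 2 - 1‖ * ‖amplitude (-k) y g 0‖ ≤ N * M := by
      have hint := integral_smul_mul_wave_neg hpair'
      rw [neg_neg, hk, ← sq] at hint
      rw [← norm_mul, ← hint]
      refine norm_integral_smul_le hq fun x hx => ?_
      rw [norm_mul, norm_wave, mul_one]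
      exact hM x hx
    have hM₀ : 0 ≤ M := (norm_nonneg _).trans (hM 0 (left_mem_Icc.mpr zero_le_one))
    calc ‖amplitude (-k) y g 0‖ * m
        = ‖exp (I * t) ^ 2 - 1‖ * ‖amplitude (-k) y g 0‖ * (m / ‖exp (I * t) ^ 2 - 1‖) := by
          field_simp
      _ ≤ N * M * (m / ‖exp (I * t) ^ 2 - 1‖) := by gcongr
      _ = N * (m / ‖exp (I * t) ^ 2 - 1‖) * M := by ring
      _ ≤ _ := by
          rw [add_mul, ← add_assoc]
          exact le_add_of_nonneg_left (by positivity)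

theorem abs_mean_le_of_isQPEigenvalue (hq : Integrable q unitMeasure)
    (hk : wave k 1 = exp (I * t)) (hev : IsQPEigenvalue q t ((k ^ 2 : ℝ) : ℂ)) (hk₀ : 0 < |k|)
    (hkN : 2 * ∫ x, |q x| ∂unitMeasure ≤ |k|) :
    |∫ x, q x ∂unitMeasure| ≤ ‖∫ x, q x • wave (2 * k) x ∂unitMeasure‖ +
      (4 * (∫ x, |q x| ∂unitMeasure) ^ 2 + (∫ x, |q x| ∂unitMeasure) *
        (|∫ x, q x ∂unitMeasure| / ‖exp (I * t) ^ 2 - 1‖)) / |k| := by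
  obtain ⟨y, g, h, hpair⟩ := hev
  obtain ⟨⟨x₁, hx₁, hy₁⟩, hderiv, -⟩ := id hpair
  obtain ⟨x₀, hx₀, hmax⟩ := isCompact_Icc.exists_isMaxOn ⟨x₁, hx₁⟩
    (HasDerivWithinAt.continuousOn hderiv).norm
  have hA := norm_amplitude_mul_abs_mean_le hq hpair hk hmax
  have hB := norm_amplitude_neg_mul_abs_mean_le hq hpair hk hmax
  have hM := abs_mul_norm_le_norm_amplitude_add hq hpair hkN hx₀ hmax
  have hM₀ : 0 < ‖y x₀‖ := (norm_pos_iff.mpr hy₁).trans_le (hmax hx₁)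
  set S := ‖amplitude k y g 0‖ + ‖amplitude (-k) y g 0‖ with hS
  set C := 4 * (∫ x, |q x| ∂unitMeasure) ^ 2 + (∫ x, |q x| ∂unitMeasure) *
    (|∫ x, q x ∂unitMeasure| / ‖exp (I * t) ^ 2 - 1‖) with hC
  have : 0 ≤ C := by positivity
  have hS₀ : 0 < S := (mul_pos hk₀ hM₀).trans_le hM
  refine le_of_mul_le_mul_left ?_ hS₀
  calc S * |∫ x, q x ∂unitMeasure|
      ≤ S * ‖∫ x, q x • wave (2 * k) x ∂unitMeasure‖ + C * ‖y x₀‖ := by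
        rw [hS, hC]
        linarith
    _ ≤ S * ‖∫ x, q x • wave (2 * k) x ∂unitMeasure‖ + C * (S / |k|) := by
        gcongr
        rwa [le_div_iff₀' hk₀]
    _ = S * (‖∫ x, q x • wave (2 * k) x ∂unitMeasure‖ + C / |k|) := by ring

theorem tendsto_integral_smul_wave (q : ℝ → ℝ) :
    Tendsto (fun k => ∫ x, q x • wave k x ∂unitMeasure) (cocompact ℝ) (𝓝 0) := by
  have hscale : Tendsto (fun k : ℝ => k * (-(2 * Real.pi))⁻¹) (cocompact ℝ) (cocompact ℝ) :=
    (Homeomorph.mulRight₀ _ (inv_ne_zero (neg_ne_zero.mpr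
      Real.two_pi_pos.ne'))).isClosedEmbedding.tendsto_cocompact
  refine ((Real.tendsto_integral_exp_smul_cocompact
    (indicator (Icc 0 1) fun x => (q x : ℂ))).comp hscale).congr fun k => ?_
  rw [← integral_indicator measurableSet_Icc]
  refine integral_congr_ae (.of_forall fun x => ?_)
  by_cases hx : x ∈ Icc (0 : ℝ) 1
  · have hchar : (Real.fourierChar (-(x * (k * (-(2 * Real.pi))⁻¹))) : ℂ) = wave k x := by
      rw [Real.fourierChar_apply, wave]
      congr 1
      push_cast
      field_simp
    simp only [indicator_of_mem hx, Circle.smul_def, hchar, smul_eq_mul, Complex.real_smul]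
    exact mul_comm _ _
  · simp only [indicator_of_notMem hx, smul_zero]

theorem integral_eq_zero_of_frequently_isQPEigenvalue (hq : Integrable q unitMeasure)
    (hspec : ∃ᶠ k in cocompact ℝ,
      wave k 1 = exp (I * t) ∧ IsQPEigenvalue q t ((k ^ 2 : ℝ) : ℂ)) :
    ∫ x, q x ∂unitMeasure = 0 := by
  have habs : Tendsto (fun k : ℝ => |k|) (cocompact ℝ) atTop := tendsto_norm_cocompact_atTop
  have hdouble : Tendsto (fun k : ℝ => 2 * k) (cocompact ℝ) (cocompact ℝ) :=
    (Homeomorph.mulLeft₀ (2 : ℝ) two_ne_zero).isClosedEmbedding.tendsto_cocompact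
  have hlim := ((tendsto_integral_smul_wave q).comp hdouble).norm.add (habs.const_div_atTop
    (4 * (∫ x, |q x| ∂unitMeasure) ^ 2 + (∫ x, |q x| ∂unitMeasure) *
      (|∫ x, q x ∂unitMeasure| / ‖exp (I * t) ^ 2 - 1‖)))
  rw [norm_zero, add_zero] at hlim
  refine abs_nonpos_iff.mp (ge_of_tendsto_of_frequently hlim ?_)
  refine (hspec.and_eventually ((habs.eventually_gt_atTop 0).and
    (habs.eventually_ge_atTop (2 * ∫ x, |q x| ∂unitMeasure)))).mono ?_
  rintro k ⟨⟨hk, hev⟩, hk₀, hkN⟩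
  exact abs_mean_le_of_isQPEigenvalue hq hk hev hk₀ hkN

end MeanValue

theorem wave_sub_two_mul_int_mul_pi_one (t : ℝ) (n : ℤ) :
    wave (t - 2 * n * Real.pi) 1 = Complex.exp (Complex.I * t) := by
  rw [wave, ← Complex.exp_periodic.sub_int_mul_eq (x := Complex.I * t) n]
  push_cast
  ring_nf

theorem tendsto_sub_two_mul_int_mul_pi (t : ℝ) :
    Tendsto (fun n : ℤ => t - 2 * n * Real.pi) cofinite (cocompact ℝ) := by
  have haffine := ((Homeomorph.mulLeft₀ _ Real.two_pi_pos.ne').trans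
    (Homeomorph.subLeft t)).isClosedEmbedding.tendsto_cocompact
  refine (haffine.comp Int.tendsto_coe_cofinite).congr fun n => ?_
  simp only [Function.comp_apply, Homeomorph.trans_apply, Homeomorph.coe_mulLeft₀,
    Homeomorph.subLeft_apply]
  ring

theorem ambarzumyan_quasiPeriodic_general {q : ℝ → ℝ} (hq : IntegrableOn q (Icc (0 : ℝ) 1)) {t : ℝ}
    (hlow : ∀ l : ℝ, IsQPEigenvalue q t l → ∃ n : ℤ, (2 * n * Real.pi - t) ^ 2 ≤ l)
    (hspec : {n : ℤ | IsQPEigenvalue q t (((2 * n * Real.pi - t) ^ 2 : ℝ) : ℂ)}.Infinite) :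
    ∀ᵐ x ∂(volume.restrict (Icc (0 : ℝ) 1)), q x = 0 := by
  have hfreq : ∃ᶠ k in cocompact ℝ, wave k 1 = Complex.exp (Complex.I * t) ∧
      IsQPEigenvalue q t ((k ^ 2 : ℝ) : ℂ) :=
    (tendsto_sub_two_mul_int_mul_pi t).frequently <|
      (frequently_cofinite_iff_infinite.mpr hspec).mono fun n hn =>
        ⟨wave_sub_two_mul_int_mul_pi_one t n, sub_sq_comm _ t ▸ hn⟩
  refine ae_eq_zero_of_forall_sq_le_eigenvalue hq
    (integral_eq_zero_of_frequently_isQPEigenvalue hq hfreq) (t := t) fun l hl => ?_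
  obtain ⟨n, hn⟩ := hlow l hl
  exact ⟨_, wave_sub_two_mul_int_mul_pi_one t n, sub_sq_comm _ t ▸ hn⟩

/-- **Ambarzumyan's theorem for the quasi-periodic problem.**
If every eigenvalue of `L_t(q)` is at least `min (t², (2π−t)²)` and `(2nπ−t)²`
is an eigenvalue for every `n ≥ 1`, then `q = 0` a.e. on `[0,1]`. -/
theorem ambarzumyan_quasiPeriodic
    (q : ℝ → ℝ) (hq : IntegrableOn q (Icc (0:ℝ) 1))
    (t : ℝ) (ht : t ∈ Ico (0:ℝ) (2 * Real.pi))
    (hlow : ∀ lam : ℂ, IsQPEigenvalue q t lam →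
      ∃ r : ℝ, lam = (r : ℂ) ∧ min (t ^ 2) ((2 * Real.pi - t) ^ 2) ≤ r)
    (hspec : ∀ n : ℕ, 1 ≤ n →
      IsQPEigenvalue q t (((2 * n * Real.pi - t) ^ 2 : ℝ) : ℂ)) :
    ∀ᵐ x ∂(volume.restrict (Icc (0:ℝ) 1)), q x = 0 := by
  refine ambarzumyan_quasiPeriodic_general (t := t) hq (fun l hl => ?_)
    (infinite_of_injective_forall_mem (f := fun n : ℕ => (n + 1 : ℤ)) (by simp [Function.Injective])
      fun n => by simpa using hspec (n + 1) n.succ_pos)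
  obtain ⟨r, hr, hmin⟩ := hlow l hl
  obtain rfl := Complex.ofReal_injective hr
  exact (min_le_iff.mp hmin).elim (fun h => ⟨0, by simpa using h⟩) fun h => ⟨1, by simpa using h⟩
end

section
/- Let q ∈ L¹[0,1] be a real-valued integrable function and let t ∈ [0,2π) be fixed. Suppose that every eigenvalue λ of the quasi-periodic problem L_t(q) satisfies λ ≥ min{t², (2π−t)²}, and that for every n ∈ ℕ (n ≥ 1) the number (2nπ + t)² is an eigenvalue of L_t(q). Then q = 0 almost everywhere on [0,1]. -/
/-!
If `y'' + ν² y = q y` with quasi-periodic boundary conditions and `e^{iν} = e^{it}`, variation of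
constants and the boundary conditions express `∫ q` through the Fourier coefficients of `q` at
`±2ν` up to `O(1/ν)`. Letting `ν = 2nπ + t` run to infinity along eigenvalues `ν²`, the
Riemann–Lebesgue lemma gives `∫ q = 0`.

On the other hand, minimizing the quadratic form `∫ |y'|² + q |y|²` produces a lowest eigenvalue,
so a lower bound `τ²` on the eigenvalues is a lower bound for the form. If `e^{iτ} = e^{it}`, the
plane wave `e^{iτx}` is admissible and its energy is `τ² + ∫ q = τ²`, so it is a minimizer. Hence
it solves the Euler–Lagrange equation, which forces `q = 0` almost everywhere.
-/

open MeasureTheory Set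

open Filter Topology ComplexConjugate

section Primitives

variable {E F : Type*} [NormedAddCommGroup E] [NormedSpace ℝ E] [NormedAddCommGroup F]
  [NormedSpace ℝ F] {y z f g : ℝ → E} {a b : ℝ}

/-- `y` is absolutely continuous on `[a, b]` with a.e. derivative `f`, encoded by the fundamental
theorem of calculus. The values of `y` outside `[a, b]` are irrelevant. -/
structure IsPrimitiveOn (y f : ℝ → E) (a b : ℝ) : Prop where
  integrableOn : IntegrableOn f (Icc a b)
  eq_add_integral : ∀ x ∈ Icc a b, y x = y a + ∫ s in a..x, f s

theorem isPrimitiveOn_add_integral (hf : IntegrableOn f (Icc a b)) (c : E) :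
    IsPrimitiveOn (fun x => c + ∫ s in a..x, f s) f a b :=
  ⟨hf, fun x _ => by simp⟩

namespace IsPrimitiveOn

theorem of_hasDerivWithinAt [CompleteSpace E]
    (hy : ∀ x ∈ Icc a b, HasDerivWithinAt y (f x) (Icc a b) x) (hf : ContinuousOn f (Icc a b)) :
    IsPrimitiveOn y f a b := by
  refine ⟨hf.integrableOn_Icc, fun x hx => ?_⟩
  have hsub : Icc a x ⊆ Icc a b := Icc_subset_Icc_right hx.2
  rw [intervalIntegral.integral_eq_sub_of_hasDeriv_right_of_le hx.1
    (fun s hs => (hy s (hsub hs)).continuousWithinAt.mono hsub) (fun s hs => ?_)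
    ((hf.mono hsub).intervalIntegrable_of_Icc hx.1), add_sub_cancel]
  have hs_nhds : Icc a b ∈ 𝓝 s := Icc_mem_nhds hs.1 (hs.2.trans_le hx.2)
  exact ((hy s (mem_of_mem_nhds hs_nhds)).hasDerivAt hs_nhds).hasDerivWithinAt

theorem congr_deriv (hy : IsPrimitiveOn y f a b) (h : f =ᵐ[volume.restrict (Icc a b)] g) :
    IsPrimitiveOn y g a b := by
  refine ⟨hy.integrableOn.congr h, fun x hx => ?_⟩
  rw [hy.eq_add_integral x hx]
  congr 1
  refine intervalIntegral.integral_congr_ae ?_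
  filter_upwards [ae_imp_of_ae_restrict h] with s hs hs_mem
  rw [uIoc_of_le hx.1] at hs_mem
  exact hs ⟨hs_mem.1.le, hs_mem.2.trans hx.2⟩

theorem intervalIntegrable (hy : IsPrimitiveOn y f a b) {x₁ x₂ : ℝ} (h₁ : x₁ ∈ Icc a b)
    (h₂ : x₂ ∈ Icc a b) : IntervalIntegrable f volume x₁ x₂ :=
  (hy.integrableOn.mono_set (uIcc_subset_Icc h₁ h₂)).intervalIntegrable

theorem sub_eq_intervalIntegral (hy : IsPrimitiveOn y f a b) {x₁ x₂ : ℝ} (h₁ : x₁ ∈ Icc a b)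
    (h₂ : x₂ ∈ Icc a b) : y x₂ - y x₁ = ∫ s in x₁..x₂, f s := by
  have ha : a ∈ Icc a b := ⟨le_rfl, h₁.1.trans h₁.2⟩
  rw [hy.eq_add_integral _ h₁, hy.eq_add_integral _ h₂, add_sub_add_left_eq_sub,
    intervalIntegral.integral_interval_sub_left (hy.intervalIntegrable ha h₂)
      (hy.intervalIntegrable ha h₁)]

theorem sub_eq_setIntegral (hy : IsPrimitiveOn y f a b) (hab : a ≤ b) :
    y b - y a = ∫ s in Icc a b, f s := by
  rw [hy.sub_eq_intervalIntegral (left_mem_Icc.2 hab) (right_mem_Icc.2 hab),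
    intervalIntegral.integral_of_le hab, integral_Icc_eq_integral_Ioc]

theorem norm_sub_le (hy : IsPrimitiveOn y f a b) {x₁ x₂ : ℝ} (h₁ : x₁ ∈ Icc a b)
    (h₂ : x₂ ∈ Icc a b) : ‖y x₁ - y x₂‖ ≤ ∫ s in Icc a b, ‖f s‖ := by
  rw [hy.sub_eq_intervalIntegral h₂ h₁]
  refine intervalIntegral.norm_integral_le_integral_norm_uIoc.trans ?_
  exact setIntegral_mono_set hy.integrableOn.norm (ae_of_all _ fun s => norm_nonneg _)
    (uIoc_subset_uIcc.trans (uIcc_subset_Icc h₂ h₁)).eventuallyLE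

theorem continuousOn (hy : IsPrimitiveOn y f a b) : ContinuousOn y (Icc a b) := by
  rcases lt_or_ge b a with hba | hab
  · simp [Icc_eq_empty_of_lt hba]
  · have h := intervalIntegral.continuousOn_primitive_interval (a := a) (b := b) (f := f)
      (μ := volume) (by rw [uIcc_of_le hab]; exact hy.integrableOn)
    rw [uIcc_of_le hab] at h
    exact (continuousOn_const.add h).congr hy.eq_add_integral

theorem hasDerivWithinAt [CompleteSpace E] (hy : IsPrimitiveOn y f a b)
    (hf : ContinuousOn f (Icc a b)) {x : ℝ} (hx : x ∈ Icc a b) :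
    HasDerivWithinAt y (f x) (Icc a b) x := by
  have : Fact (x ∈ Icc a b) := ⟨hx⟩
  have hderiv := (intervalIntegral.integral_hasDerivWithinAt_right (s := Icc a b) (t := Icc a b)
    (hy.intervalIntegrable ⟨le_rfl, hx.1.trans hx.2⟩ hx)
    (hf.stronglyMeasurableAtFilter_nhdsWithin measurableSet_Icc x) (hf x hx)).const_add (y a)
  exact hderiv.congr hy.eq_add_integral (hy.eq_add_integral x hx)

theorem memLp_two (hy : IsPrimitiveOn y f a b) : MemLp y 2 (volume.restrict (Icc a b)) :=
  (memLp_two_iff_integrable_sq_norm (hy.continuousOn.aestronglyMeasurable measurableSet_Icc)).2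
    (hy.continuousOn.norm.pow 2).integrableOn_Icc

theorem ae_hasDerivAt [CompleteSpace E] (hy : IsPrimitiveOn y f a b) :
    ∀ᵐ x ∂volume.restrict (Icc a b), HasDerivAt y (f x) x := by
  rcases lt_or_ge b a with hba | hab
  · simp [Icc_eq_empty_of_lt hba]
  have hint := hy.intervalIntegrable (left_mem_Icc.2 hab) (right_mem_Icc.2 hab)
  rw [← restrict_Ioo_eq_restrict_Icc, ae_restrict_iff' measurableSet_Ioo]
  filter_upwards [hint.ae_hasDerivAt_integral] with x hx hx_mem
  have hx_deriv : HasDerivAt (fun u => y a + ∫ s in a..u, f s) (f x) x :=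
    (hx (uIcc_of_le hab ▸ Ioo_subset_Icc_self hx_mem) a left_mem_uIcc).const_add _
  refine hx_deriv.congr_of_eventuallyEq ?_
  filter_upwards [Ioo_mem_nhds hx_mem.1 hx_mem.2] with u hu
  exact hy.eq_add_integral u (Ioo_subset_Icc_self hu)

theorem deriv_ae_eq_of_eqOn [CompleteSpace E] (hy : IsPrimitiveOn y f a b)
    (hz : IsPrimitiveOn z g a b) (h : EqOn y z (Icc a b)) :
    f =ᵐ[volume.restrict (Icc a b)] g := by
  have hz' : IsPrimitiveOn y g a b :=
    ⟨hz.integrableOn, fun x hx => by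
      rw [h hx, h ⟨le_rfl, hx.1.trans hx.2⟩, hz.eq_add_integral x hx]⟩
  filter_upwards [hy.ae_hasDerivAt, hz'.ae_hasDerivAt] with x hx₁ hx₂ using hx₁.unique hx₂

theorem clm_comp [CompleteSpace E] [CompleteSpace F] (hy : IsPrimitiveOn y f a b) (L : E →L[ℝ] F) :
    IsPrimitiveOn (fun x => L (y x)) (fun x => L (f x)) a b where
  integrableOn := L.integrable_comp hy.integrableOn
  eq_add_integral x hx := by
    rw [L.intervalIntegral_comp_comm (hy.intervalIntegrable ⟨le_rfl, hx.1.trans hx.2⟩ hx),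
      hy.eq_add_integral x hx, map_add]

theorem add (hy : IsPrimitiveOn y f a b) (hz : IsPrimitiveOn z g a b) :
    IsPrimitiveOn (fun x => y x + z x) (fun x => f x + g x) a b where
  integrableOn := hy.integrableOn.add hz.integrableOn
  eq_add_integral x hx := by
    have ha : a ∈ Icc a b := ⟨le_rfl, hx.1.trans hx.2⟩
    rw [intervalIntegral.integral_add (hy.intervalIntegrable ha hx) (hz.intervalIntegrable ha hx),
      hy.eq_add_integral x hx, hz.eq_add_integral x hx]
    abel

theorem absolutelyContinuousOnInterval (hy : IsPrimitiveOn y f a b) (hab : a ≤ b) :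
    AbsolutelyContinuousOnInterval y a b := by
  have hnorm : IsPrimitiveOn (fun x => (0 : ℝ) + ∫ s in a..x, ‖f s‖) (fun x => ‖f x‖) a b :=
    isPrimitiveOn_add_integral hy.integrableOn.norm 0
  have hnorm_ac : AbsolutelyContinuousOnInterval (fun x => ∫ s in a..x, ‖f s‖) a b :=
    (hnorm.intervalIntegrable (left_mem_Icc.2 hab) (right_mem_Icc.2 hab))
      |>.absolutelyContinuousOnInterval_intervalIntegral left_mem_uIcc
  refine squeeze_zero' (.of_forall fun _ => Finset.sum_nonneg fun _ _ => dist_nonneg) ?_ hnorm_ac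
  rw [eventually_inf_principal]
  filter_upwards with I hI
  refine Finset.sum_le_sum fun i hi => ?_
  obtain ⟨h₁, h₂⟩ := hI.1 i hi
  rw [uIcc_of_le hab] at h₁ h₂
  have key := hnorm.sub_eq_intervalIntegral h₁ h₂
  simp only [zero_add] at key
  rw [dist_comm, dist_eq_norm, hy.sub_eq_intervalIntegral h₁ h₂, dist_comm (α := ℝ), Real.dist_eq,
    key]
  exact intervalIntegral.norm_integral_le_abs_integral_norm

theorem mul {𝔸 : Type*} [NormedRing 𝔸] [NormedAlgebra ℝ 𝔸] [NormMulClass 𝔸]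
    [CompleteSpace 𝔸] {y z f g : ℝ → 𝔸}
    (hy : IsPrimitiveOn y f a b) (hz : IsPrimitiveOn z g a b) :
    IsPrimitiveOn (fun x => y x * z x) (fun x => f x * z x + y x * g x) a b := by
  have hint : IntegrableOn (fun x => f x * z x + y x * g x) (Icc a b) :=
    (hy.integrableOn.mul_continuousOn hz.continuousOn isCompact_Icc).add
      (hz.integrableOn.continuousOn_mul hy.continuousOn isCompact_Icc)
  refine ⟨hint, fun x hx => ?_⟩
  have hab : a ≤ b := hx.1.trans hx.2
  set w : ℝ → 𝔸 := fun x => 0 + ∫ s in a..x, f s * z s + y s * g s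
  have hw : IsPrimitiveOn w _ a b := isPrimitiveOn_add_integral hint 0
  have hac := ((hy.absolutelyContinuousOnInterval hab).smul
    (hz.absolutelyContinuousOnInterval hab)).sub (hw.absolutelyContinuousOnInterval hab)
  obtain ⟨C, hC⟩ := hac.const_of_ae_hasDerivAt_zero <| by
    rw [uIcc_of_le hab, ← ae_restrict_iff' measurableSet_Icc]
    filter_upwards [hy.ae_hasDerivAt, hz.ae_hasDerivAt, hw.ae_hasDerivAt] with s hys hzs hws
    simpa using! (hys.mul hzs).sub hws
  have hxa := (hC x (uIcc_of_le hab ▸ hx)).trans (hC a left_mem_uIcc).symm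
  simp only [Pi.sub_apply, smul_eq_mul, w, zero_add,
    intervalIntegral.integral_same, sub_zero] at hxa
  rwa [sub_eq_iff_eq_add] at hxa

end IsPrimitiveOn

theorem IsPrimitiveOn.conj {y f : ℝ → ℂ} {a b : ℝ} (hy : IsPrimitiveOn y f a b) :
    IsPrimitiveOn (fun x => conj (y x)) (fun x => conj (f x)) a b :=
  hy.clm_comp Complex.conjCLE.toContinuousLinearMap

end Primitives

local notation "𝕀" => Icc (0 : ℝ) 1

section PlaneWaves

/-- The plane wave `x ↦ e^{iνx}`. Its value at `1` is the multiplier of the boundary condition. -/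
noncomputable def planeWave (ν x : ℝ) : ℂ := Complex.exp (Complex.I * (ν * x))

theorem planeWave_one (ν : ℝ) : planeWave ν 1 = Complex.exp (Complex.I * ν) := by
  simp [planeWave]

@[simp]
theorem planeWave_zero_right (ν : ℝ) : planeWave ν 0 = 1 := by
  simp [planeWave]

@[simp]
theorem norm_planeWave (ν x : ℝ) : ‖planeWave ν x‖ = 1 := by
  simp [planeWave, Complex.norm_exp]

theorem planeWave_ne_zero (ν x : ℝ) : planeWave ν x ≠ 0 :=
  Complex.exp_ne_zero _

theorem planeWave_add (ν ξ x : ℝ) : planeWave (ν + ξ) x = planeWave ν x * planeWave ξ x := by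
  simp only [planeWave, ← Complex.exp_add]
  push_cast
  ring_nf

@[simp]
theorem planeWave_mul_planeWave_neg (ν x : ℝ) : planeWave ν x * planeWave (-ν) x = 1 := by
  rw [← planeWave_add]
  simp [planeWave]

theorem hasDerivAt_planeWave (ν x : ℝ) :
    HasDerivAt (planeWave ν) (Complex.I * ν * planeWave ν x) x := by
  have h := (((hasDerivAt_id x).ofReal_comp.const_mul (ν : ℂ)).const_mul Complex.I).cexp
  refine h.congr_deriv ?_
  simp [planeWave]
  ring

@[fun_prop]
theorem continuous_planeWave (ν : ℝ) : Continuous (planeWave ν) :=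
  continuous_iff_continuousAt.2 fun x => (hasDerivAt_planeWave ν x).continuousAt

theorem isPrimitiveOn_planeWave (ν a b : ℝ) :
    IsPrimitiveOn (planeWave ν) (fun x => Complex.I * ν * planeWave ν x) a b :=
  .of_hasDerivWithinAt (fun x _ => (hasDerivAt_planeWave ν x).hasDerivWithinAt) (by fun_prop)

theorem tendsto_setIntegral_mul_planeWave (f : ℝ → ℂ) {s : Set ℝ} (hs : MeasurableSet s) :
    Tendsto (fun ν : ℝ => ∫ x in s, f x * planeWave ν x) (cocompact ℝ) (𝓝 0) := by
  have hc : Tendsto (fun ν : ℝ => ν * (-(2 * Real.pi)⁻¹)) (cocompact ℝ) (cocompact ℝ) :=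
    (Homeomorph.mulRight₀ _ (by simp [Real.pi_ne_zero])).isClosedEmbedding.tendsto_cocompact
  refine ((Real.tendsto_integral_exp_smul_cocompact (s.indicator f)).comp hc).congr fun ν => ?_
  rw [Function.comp_apply, ← integral_indicator hs]
  congr 1 with x
  by_cases hx : x ∈ s
  · simp only [indicator_of_mem hx, Circle.smul_def, Real.fourierChar_apply, smul_eq_mul, planeWave]
    rw [mul_comm]
    congr 2
    push_cast
    have hpi : (Real.pi : ℂ) ≠ 0 := Complex.ofReal_ne_zero.2 Real.pi_ne_zero
    field_simp
  · simp [indicator_of_notMem hx]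

end PlaneWaves

section Amplitudes

theorem norm_le_of_norm_mul_add_mul_le {R : Type*} [NormedRing R] [NormMulClass R]
    {u v r s α β : R} {ε : ℝ} (huv : ‖u‖ ≤ ‖v‖) (hpos : 0 < ‖α‖ + ‖β‖)
    (hα : ‖u * α + r * β‖ ≤ ε * (‖α‖ + ‖β‖)) (hβ : ‖v * β + s * α‖ ≤ ε * (‖α‖ + ‖β‖)) :
    ‖u‖ ≤ ‖r‖ + ‖s‖ + 2 * ε := by
  have hα' := norm_le_add_norm_add (u * α) (r * β)
  have hβ' := norm_le_add_norm_add (v * β) (s * α)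
  simp only [norm_mul] at hα' hβ'
  have huβ : ‖u‖ * ‖β‖ ≤ ‖v‖ * ‖β‖ := by gcongr
  have hcross : 0 ≤ ‖r‖ * ‖α‖ + ‖s‖ * ‖β‖ := by positivity
  refine le_of_mul_le_mul_right ?_ hpos
  linarith

variable {q : ℝ → ℝ} {t ν : ℝ} {lam : ℂ} {y g h : ℝ → ℂ}

/-- Variation of constants for `y'' + ν² y = q y`: the coefficient of `e^{iνx}` in
`y = A(ν, x) e^{iνx} + A(-ν, x) e^{-iνx}`, `y' = iν (A(ν, x) e^{iνx} - A(-ν, x) e^{-iνx})`, where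
`g = y'` and `ν ≠ 0`. -/
noncomputable def waveAmplitude (y g : ℝ → ℂ) (ν x : ℝ) : ℂ :=
  (2 * Complex.I * ν)⁻¹ * ((g x + Complex.I * ν * y x) * planeWave (-ν) x)

theorem eq_waveAmplitude_add (hν : ν ≠ 0) (y g : ℝ → ℂ) (x : ℝ) :
    y x = waveAmplitude y g ν x * planeWave ν x
      + waveAmplitude y g (-ν) x * planeWave (-ν) x := by
  have hν' : (ν : ℂ) ≠ 0 := Complex.ofReal_ne_zero.2 hν
  have hpw := planeWave_mul_planeWave_neg ν x
  simp only [waveAmplitude, neg_neg, Complex.ofReal_neg]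
  field_simp
  linear_combination (-2 * Complex.I * ν * y x) * hpw

namespace IsQPEigenpair

theorem isPrimitiveOn (hyp : IsQPEigenpair q t lam y g h) : IsPrimitiveOn y g 0 1 :=
  .of_hasDerivWithinAt hyp.2.1 hyp.2.2.1

theorem isPrimitiveOn_deriv (hyp : IsQPEigenpair q t lam y g h) :
    IsPrimitiveOn g (fun x => (q x - lam) * y x) 0 1 := by
  obtain ⟨-, -, -, hh, hg, hode, -⟩ := hyp
  refine IsPrimitiveOn.congr_deriv ⟨hh, hg⟩ ?_
  filter_upwards [hode] with x hx
  linear_combination -hx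

theorem apply_one (hyp : IsQPEigenpair q t lam y g h) : y 1 = planeWave t 1 * y 0 := by
  rw [planeWave_one, hyp.2.2.2.2.2.2.1]

theorem deriv_apply_one (hyp : IsQPEigenpair q t lam y g h) : g 1 = planeWave t 1 * g 0 := by
  rw [planeWave_one, hyp.2.2.2.2.2.2.2]

theorem isPrimitiveOn_waveAmplitude (hyp : IsQPEigenpair q t ((ν ^ 2 : ℝ) : ℂ) y g h) :
    IsPrimitiveOn (waveAmplitude y g ν)
      (fun x => (2 * Complex.I * ν)⁻¹ * (q x * y x * planeWave (-ν) x)) 0 1 := by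
  have hsum := hyp.isPrimitiveOn_deriv.add
    (hyp.isPrimitiveOn.clm_comp (ContinuousLinearMap.mul ℝ ℂ (Complex.I * ν)))
  have hprod := (hsum.mul (isPrimitiveOn_planeWave (-ν) 0 1)).clm_comp
    (ContinuousLinearMap.mul ℝ ℂ (2 * Complex.I * ν)⁻¹)
  refine hprod.congr_deriv (ae_of_all _ fun x => ?_)
  simp only [ContinuousLinearMap.mul_apply']
  push_cast
  linear_combination
    (-(2 * Complex.I * ν)⁻¹ * ν ^ 2 * y x * planeWave (-ν) x) * Complex.I_sq

theorem waveAmplitude_one (hyp : IsQPEigenpair q t lam y g h) (ν : ℝ) :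
    waveAmplitude y g ν 1 = planeWave (t - ν) 1 * waveAmplitude y g ν 0 := by
  simp only [waveAmplitude, hyp.apply_one, hyp.deriv_apply_one, sub_eq_add_neg, planeWave_add,
    planeWave_zero_right]
  ring

theorem norm_waveAmplitude_sub_le (hq : IntegrableOn q 𝕀)
    (hyp : IsQPEigenpair q t ((ν ^ 2 : ℝ) : ℂ) y g h) {M : ℝ} (hM : ∀ x ∈ 𝕀, ‖y x‖ ≤ M)
    {x : ℝ} (hx : x ∈ 𝕀) :
    ‖waveAmplitude y g ν x - waveAmplitude y g ν 0‖ ≤ (∫ s in 𝕀, |q s|) * M / (2 * |ν|) := by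
  have hprim := hyp.isPrimitiveOn_waveAmplitude
  refine (hprim.norm_sub_le hx (left_mem_Icc.2 zero_le_one)).trans ?_
  rw [mul_div_assoc, ← integral_mul_const]
  refine setIntegral_mono_on hprim.integrableOn.norm (hq.abs.mul_const _) measurableSet_Icc
    fun s hs => ?_
  have hnorm : ‖(2 * Complex.I * ν)⁻¹ * (q s * y s * planeWave (-ν) s)‖
      = |q s| * (‖y s‖ / (2 * |ν|)) := by
    simp
    ring
  rw [hnorm]
  gcongr
  exact hM s hs

theorem two_I_mul_waveAmplitude_one_sub (hν : ν ≠ 0)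
    (hyp : IsQPEigenpair q t ((ν ^ 2 : ℝ) : ℂ) y g h) :
    2 * Complex.I * ν * (waveAmplitude y g ν 1 - waveAmplitude y g ν 0)
      = ∫ x in 𝕀, q x * y x * planeWave (-ν) x := by
  have hν' : (ν : ℂ) ≠ 0 := Complex.ofReal_ne_zero.2 hν
  rw [hyp.isPrimitiveOn_waveAmplitude.sub_eq_setIntegral zero_le_one, integral_const_mul]
  field_simp

theorem waveAmplitude_relation (hq : IntegrableOn q 𝕀) (hν : ν ≠ 0)
    (hyp : IsQPEigenpair q t ((ν ^ 2 : ℝ) : ℂ) y g h) :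
    ((∫ x in 𝕀, (q x : ℂ)) - 2 * Complex.I * ν * (planeWave (t - ν) 1 - 1))
        * waveAmplitude y g ν 0
      + (∫ x in 𝕀, q x * planeWave (-(2 * ν)) x) * waveAmplitude y g (-ν) 0
      = ∫ x in 𝕀, -(q x * ((waveAmplitude y g ν x - waveAmplitude y g ν 0)
        + (waveAmplitude y g (-ν) x - waveAmplitude y g (-ν) 0) * planeWave (-(2 * ν)) x)) := by
  have hqc : IntegrableOn (fun x => (q x : ℂ)) 𝕀 := hq.ofReal
  have hqpw : IntegrableOn (fun x => q x * planeWave (-(2 * ν)) x) 𝕀 :=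
    hqc.mul_continuousOn (by fun_prop) isCompact_Icc
  have hqy : IntegrableOn (fun x => q x * y x * planeWave (-ν) x) 𝕀 :=
    (hqc.mul_continuousOn hyp.isPrimitiveOn.continuousOn isCompact_Icc).mul_continuousOn
      (by fun_prop) isCompact_Icc
  have hsplit : ∀ x, -(q x * ((waveAmplitude y g ν x - waveAmplitude y g ν 0)
        + (waveAmplitude y g (-ν) x - waveAmplitude y g (-ν) 0) * planeWave (-(2 * ν)) x))
      = q x * waveAmplitude y g ν 0 + q x * planeWave (-(2 * ν)) x * waveAmplitude y g (-ν) 0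
        - q x * y x * planeWave (-ν) x := by
    intro x
    rw [eq_waveAmplitude_add hν y g x, two_mul, neg_add, planeWave_add]
    linear_combination (q x * waveAmplitude y g ν x) * planeWave_mul_planeWave_neg ν x
  have hbdry := hyp.two_I_mul_waveAmplitude_one_sub hν
  rw [hyp.waveAmplitude_one] at hbdry
  simp_rw [hsplit]
  rw [integral_sub (by exact (hqc.mul_const _).add (hqpw.mul_const _)) hqy,
    integral_add (hqc.mul_const _) (hqpw.mul_const _), integral_mul_const, integral_mul_const]
  linear_combination -hbdry

/-- Freezing both amplitudes at their values at `0` in `y` turns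
`∫ q y e^{-iνx} = 2iν (A(ν, 1) - A(ν, 0))` into a linear relation up to `O(1/ν)`. -/
theorem norm_waveAmplitude_relation_le (hq : IntegrableOn q 𝕀) (hν : ν ≠ 0)
    (hyp : IsQPEigenpair q t ((ν ^ 2 : ℝ) : ℂ) y g h) {M : ℝ} (hM : ∀ x ∈ 𝕀, ‖y x‖ ≤ M) :
    ‖((∫ x in 𝕀, (q x : ℂ)) - 2 * Complex.I * ν * (planeWave (t - ν) 1 - 1))
        * waveAmplitude y g ν 0
      + (∫ x in 𝕀, q x * planeWave (-(2 * ν)) x) * waveAmplitude y g (-ν) 0‖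
      ≤ (∫ x in 𝕀, |q x|) ^ 2 * M / |ν| := by
  have hyp' : IsQPEigenpair q t (((-ν) ^ 2 : ℝ) : ℂ) y g h := by rwa [neg_sq]
  have hdom : (∫ x in 𝕀, |q x|) ^ 2 * M / |ν|
      = ∫ x in 𝕀, |q x| * ((∫ s in 𝕀, |q s|) * M / |ν|) := by
    rw [integral_mul_const]
    ring
  rw [hyp.waveAmplitude_relation hq hν, hdom]
  refine norm_integral_le_of_norm_le (hq.abs.mul_const _) ?_
  filter_upwards [ae_restrict_mem measurableSet_Icc] with x hx
  have hA := hyp.norm_waveAmplitude_sub_le hq hM hx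
  have hB := hyp'.norm_waveAmplitude_sub_le hq hM hx
  rw [abs_neg] at hB
  rw [norm_neg, norm_mul, Complex.norm_real, Real.norm_eq_abs]
  gcongr
  refine (norm_add_le _ _).trans ?_
  rw [norm_mul, norm_planeWave, mul_one]
  refine (add_le_add hA hB).trans_eq ?_
  ring

theorem exists_norm_le_two_mul_waveAmplitude (hq : IntegrableOn q 𝕀) (hν : ν ≠ 0)
    (hlarge : 2 * ∫ x in 𝕀, |q x| ≤ |ν|) (hyp : IsQPEigenpair q t ((ν ^ 2 : ℝ) : ℂ) y g h) :
    ∃ M > 0, (∀ x ∈ 𝕀, ‖y x‖ ≤ M) ∧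
      M ≤ 2 * (‖waveAmplitude y g ν 0‖ + ‖waveAmplitude y g (-ν) 0‖) := by
  have hyp' : IsQPEigenpair q t (((-ν) ^ 2 : ℝ) : ℂ) y g h := by rwa [neg_sq]
  obtain ⟨x₀, hx₀, hmax⟩ := isCompact_Icc.exists_isMaxOn (nonempty_Icc.2 zero_le_one)
    hyp.isPrimitiveOn.continuousOn.norm
  obtain ⟨x₁, hx₁, hyx₁⟩ := hyp.1
  refine ⟨‖y x₀‖, (norm_pos_iff.2 hyx₁).trans_le (hmax hx₁), fun x hx => hmax hx, ?_⟩
  have hA := hyp.norm_waveAmplitude_sub_le hq (fun x hx => hmax hx) hx₀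
  have hB := hyp'.norm_waveAmplitude_sub_le hq (fun x hx => hmax hx) hx₀
  have hdrift : (∫ s in 𝕀, |q s|) * ‖y x₀‖ / (2 * |ν|) ≤ ‖y x₀‖ / 4 := by
    rw [div_le_div_iff₀ (by positivity) (by norm_num)]
    nlinarith [norm_nonneg (y x₀)]
  have htri : ‖y x₀‖ ≤ ‖waveAmplitude y g ν x₀‖ + ‖waveAmplitude y g (-ν) x₀‖ := by
    conv_lhs => rw [eq_waveAmplitude_add hν y g x₀]
    simpa using norm_add_le (waveAmplitude y g ν x₀ * planeWave ν x₀)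
      (waveAmplitude y g (-ν) x₀ * planeWave (-ν) x₀)
  rw [abs_neg] at hB
  linarith [norm_le_norm_add_norm_sub' (waveAmplitude y g ν x₀) (waveAmplitude y g ν 0),
    norm_le_norm_add_norm_sub' (waveAmplitude y g (-ν) x₀) (waveAmplitude y g (-ν) 0)]

theorem norm_integral_le (hq : IntegrableOn q 𝕀) (hν : ν ≠ 0)
    (hlarge : 2 * ∫ x in 𝕀, |q x| ≤ |ν|) (hres : planeWave ν 1 = planeWave t 1)
    (hdom : ‖∫ x in 𝕀, (q x : ℂ)‖
      ≤ ‖(∫ x in 𝕀, (q x : ℂ)) + 2 * Complex.I * ν * (planeWave (2 * t) 1 - 1)‖)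
    (hyp : IsQPEigenpair q t ((ν ^ 2 : ℝ) : ℂ) y g h) :
    ‖∫ x in 𝕀, (q x : ℂ)‖ ≤ ‖∫ x in 𝕀, q x * planeWave (-(2 * ν)) x‖
      + ‖∫ x in 𝕀, q x * planeWave (2 * ν) x‖ + 4 * (∫ x in 𝕀, |q x|) ^ 2 / |ν| := by
  have hyp' : IsQPEigenpair q t (((-ν) ^ 2 : ℝ) : ℂ) y g h := by rwa [neg_sq]
  obtain ⟨M, hM_pos, hM, hMS⟩ := hyp.exists_norm_le_two_mul_waveAmplitude hq hν hlarge
  have hA := hyp.norm_waveAmplitude_relation_le hq hν hM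
  have hB := hyp'.norm_waveAmplitude_relation_le hq (neg_ne_zero.2 hν) hM
  have hphase : planeWave (t - ν) 1 = 1 := by
    rw [sub_eq_add_neg, planeWave_add, ← hres, planeWave_mul_planeWave_neg]
  have hphase' : planeWave (t - -ν) 1 = planeWave (2 * t) 1 := by
    rw [sub_neg_eq_add, two_mul, planeWave_add, planeWave_add, hres]
  rw [hphase, sub_self, mul_zero, sub_zero] at hA
  rw [hphase', Complex.ofReal_neg, mul_neg, neg_mul, sub_neg_eq_add, mul_neg, neg_neg, neg_neg,
    abs_neg] at hB
  have hrem : (∫ x in 𝕀, |q x|) ^ 2 * M / |ν| ≤ 2 * (∫ x in 𝕀, |q x|) ^ 2 / |ν|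
      * (‖waveAmplitude y g ν 0‖ + ‖waveAmplitude y g (-ν) 0‖) := by
    refine (show _ ≤ (∫ x in 𝕀, |q x|) ^ 2
      * (2 * (‖waveAmplitude y g ν 0‖ + ‖waveAmplitude y g (-ν) 0‖)) / |ν| by gcongr).trans_eq ?_
    ring
  refine (norm_le_of_norm_mul_add_mul_le hdom (by linarith) (hA.trans hrem)
    (hB.trans hrem)).trans_eq ?_
  ring

end IsQPEigenpair

end Amplitudes

section MeanZero

theorem tendsto_two_mul_int_mul_pi_add_cocompact (t : ℝ) :
    Tendsto (fun n : ℤ => 2 * n * Real.pi + t) cofinite (cocompact ℝ) := by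
  have hint := Int.tendsto_coe_cofinite
  have haff := ((Homeomorph.mulRight₀ (2 * Real.pi) (by positivity)).trans
    (Homeomorph.addRight t)).isClosedEmbedding.tendsto_cocompact
  refine (haff.comp hint).congr fun n => ?_
  simp
  ring

theorem planeWave_two_mul_int_mul_pi_add_one (n : ℤ) (t : ℝ) :
    planeWave (2 * n * Real.pi + t) 1 = planeWave t 1 := by
  rw [planeWave_add, planeWave_one, planeWave_one]
  convert one_mul (Complex.exp (Complex.I * t)) using 2
  rw [← Complex.exp_int_mul_two_pi_mul_I n]
  push_cast
  ring_nf

theorem eventually_norm_le_norm_add_smul_cocompact {E : Type*} [NormedAddCommGroup E]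
    [NormedSpace ℝ E] (u v : E) : ∀ᶠ ν : ℝ in cocompact ℝ, ‖u‖ ≤ ‖u + ν • v‖ := by
  rcases eq_or_ne v 0 with rfl | hv
  · simp
  have hsmul : Tendsto (fun ν : ℝ => ‖ν‖ * ‖v‖) (cocompact ℝ) atTop :=
    tendsto_norm_cocompact_atTop.atTop_mul_const (norm_pos_iff.2 hv)
  filter_upwards [hsmul.eventually_ge_atTop (2 * ‖u‖)] with ν hν
  have htri := norm_le_add_norm_add' u (ν • v)
  rw [norm_smul] at htri
  linarith

theorem integral_eq_zero_of_frequently_isQPEigenvalue_s1 {q : ℝ → ℝ} {t : ℝ} (hq : IntegrableOn q 𝕀)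
    (hspec : ∃ᶠ n : ℤ in cofinite, IsQPEigenvalue q t (((2 * n * Real.pi + t) ^ 2 : ℝ) : ℂ)) :
    ∫ x in 𝕀, q x = 0 := by
  set ν : ℤ → ℝ := fun n => 2 * n * Real.pi + t
  set Q := ∫ x in 𝕀, |q x|
  have hν : Tendsto ν cofinite (cocompact ℝ) := tendsto_two_mul_int_mul_pi_add_cocompact t
  have habs : Tendsto (fun n => |ν n|) cofinite atTop := tendsto_norm_cocompact_atTop.comp hν
  have hdom := hν.eventually (eventually_norm_le_norm_add_smul_cocompact
    (∫ x in 𝕀, (q x : ℂ)) (2 * Complex.I * (planeWave (2 * t) 1 - 1)))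
  have hbound : ∃ᶠ n in cofinite, ‖∫ x in 𝕀, (q x : ℂ)‖
      ≤ ‖∫ x in 𝕀, q x * planeWave (-(2 * ν n)) x‖
        + ‖∫ x in 𝕀, q x * planeWave (2 * ν n) x‖ + 4 * Q ^ 2 / |ν n| := by
    refine (hspec.and_eventually (hdom.and ((habs.eventually_ge_atTop (2 * Q)).and
      (habs.eventually_gt_atTop 0)))).mono ?_
    rintro n ⟨⟨y, g, h, hyp⟩, hdom_n, hlarge, hpos⟩
    refine hyp.norm_integral_le hq (abs_pos.1 hpos) hlarge
      (planeWave_two_mul_int_mul_pi_add_one n t) (hdom_n.trans_eq ?_)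
    rw [Complex.real_smul]
    ring_nf
  have hRL (c : ℝ) (hc : c ≠ 0) :
      Tendsto (fun n => ‖∫ x in 𝕀, q x * planeWave (c * ν n) x‖) cofinite (𝓝 0) := by
    have hscale := (Homeomorph.mulLeft₀ c hc).isClosedEmbedding.tendsto_cocompact
    simpa using ((tendsto_setIntegral_mul_planeWave (fun x => (q x : ℂ)) measurableSet_Icc).comp
      (hscale.comp hν)).norm
  have hlim : Tendsto (fun n => ‖∫ x in 𝕀, q x * planeWave (-(2 * ν n)) x‖
      + ‖∫ x in 𝕀, q x * planeWave (2 * ν n) x‖ + 4 * Q ^ 2 / |ν n|) cofinite (𝓝 0) := by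
    simpa using ((hRL (-2) (by norm_num)).add (hRL 2 (by norm_num))).add
      (habs.const_div_atTop (4 * Q ^ 2))
  have hnorm : ‖∫ x in 𝕀, (q x : ℂ)‖ ≤ 0 := ge_of_tendsto_of_frequently hlim hbound
  rwa [norm_le_zero_iff, integral_complex_ofReal, Complex.ofReal_eq_zero] at hnorm

end MeanZero

section WeakCompactness

theorem exists_subseq_tendsto_inner {𝕜 H : Type*} [RCLike 𝕜] [NormedAddCommGroup H]
    [InnerProductSpace 𝕜 H] [CompleteSpace H] [TopologicalSpace.SeparableSpace H] {v : ℕ → H}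
    {R : ℝ} (hv : ∀ n, ‖v n‖ ≤ R) :
    ∃ (w : H) (φ : ℕ → ℕ), StrictMono φ ∧
      ∀ z, Tendsto (fun n => inner 𝕜 z (v (φ n))) atTop (𝓝 (inner 𝕜 z w)) := by
  set ℓ : ℕ → WeakDual 𝕜 H := fun n => StrongDual.toWeakDual (InnerProductSpace.toDual 𝕜 H (v n))
  have hmem : ∀ n, ℓ n ∈
      WeakDual.toStrongDual (𝕜 := 𝕜) (E := H) ⁻¹' Metric.closedBall (0 : StrongDual 𝕜 H) R :=
    fun n => mem_closedBall_zero_iff.2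
      (((InnerProductSpace.toDual 𝕜 H).norm_map (v n)).trans_le (hv n))
  obtain ⟨ℓ', -, φ, hφ, hlim⟩ := WeakDual.isSeqCompact_closedBall 𝕜 H 0 R hmem
  refine ⟨(InnerProductSpace.toDual 𝕜 H).symm (WeakDual.toStrongDual ℓ'), φ, hφ, fun z => ?_⟩
  have heval := ((WeakDual.eval_continuous (𝕜 := 𝕜) z).tendsto ℓ').comp hlim
  rw [← inner_conj_symm z, InnerProductSpace.toDual_symm_apply]
  refine ((RCLike.continuous_conj.tendsto _).comp heval).congr fun n => ?_
  rw [← inner_conj_symm z]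
  rfl

theorem norm_sq_le_of_tendsto_inner {𝕜 H ι : Type*} [RCLike 𝕜] [SeminormedAddCommGroup H]
    [InnerProductSpace 𝕜 H] {l : Filter ι} [l.NeBot] {v : ι → H} {w : H} {c : ℝ}
    (hv : Tendsto (fun n => inner 𝕜 w (v n)) l (𝓝 (inner 𝕜 w w)))
    (hc : Tendsto (fun n => ‖v n‖ ^ 2) l (𝓝 c)) : ‖w‖ ^ 2 ≤ c := by
  have hre := (RCLike.continuous_re.tendsto _).comp hv
  rw [inner_self_eq_norm_sq] at hre
  have hle : ‖w‖ ^ 2 ≤ (‖w‖ ^ 2 + c) / 2 :=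
    le_of_tendsto_of_tendsto' hre ((hc.const_add _).div_const 2) fun n => by
      rw [Function.comp_apply]
      linarith [re_inner_le_norm (𝕜 := 𝕜) w (v n), two_mul_le_add_sq ‖w‖ ‖v n‖]
  linarith

variable {α : Type*} [MeasurableSpace α] {μ : Measure α}

theorem norm_toLp_sq (𝕜 : Type*) {E : Type*} [RCLike 𝕜] [NormedAddCommGroup E]
    [InnerProductSpace 𝕜 E] {f : α → E} (hf : MemLp f 2 μ) :
    ‖hf.toLp f‖ ^ 2 = ∫ x, ‖f x‖ ^ 2 ∂μ := by
  rw [← RCLike.ofReal_inj (K := 𝕜), RCLike.ofReal_pow, ← inner_self_eq_norm_sq_to_K,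
    L2.inner_def, ← integral_ofReal]
  refine integral_congr_ae ?_
  filter_upwards [hf.coeFn_toLp] with x hx
  rw [hx, inner_self_eq_norm_sq_to_K, RCLike.ofReal_pow]

theorem exists_subseq_tendsto_setIntegral_of_memLp_two [MeasurableSpace.CountablyGenerated α]
    [IsFiniteMeasure μ] {f : ℕ → α → ℂ} (hf : ∀ n, MemLp (f n) 2 μ) {R : ℝ}
    (hR : ∀ n, ∫ x, ‖f n x‖ ^ 2 ∂μ ≤ R) :
    ∃ (g : α → ℂ) (φ : ℕ → ℕ), MemLp g 2 μ ∧ StrictMono φ ∧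
      (∀ s, MeasurableSet s →
        Tendsto (fun n => ∫ x in s, f (φ n) x ∂μ) atTop (𝓝 (∫ x in s, g x ∂μ))) ∧
      ∀ c, Tendsto (fun n => ∫ x, ‖f (φ n) x‖ ^ 2 ∂μ) atTop (𝓝 c) → ∫ x, ‖g x‖ ^ 2 ∂μ ≤ c := by
  have : Fact ((2 : ENNReal) ≠ ⊤) := ⟨by simp⟩
  obtain ⟨w, φ, hφ, hlim⟩ := exists_subseq_tendsto_inner (𝕜 := ℂ)
    (v := fun n => (hf n).toLp (f n)) (R := √R)
    fun n => Real.le_sqrt_of_sq_le ((norm_toLp_sq ℂ (hf n)).trans_le (hR n))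
  refine ⟨w, φ, Lp.memLp w, hφ, fun s hs => ?_, fun c hc => ?_⟩
  · have hs_lim := hlim (indicatorConstLp 2 hs (measure_ne_top μ s) 1)
    simp only [L2.inner_indicatorConstLp_one] at hs_lim
    exact hs_lim.congr fun n => integral_congr_ae (ae_restrict_of_ae (hf (φ n)).coeFn_toLp)
  · simp only [← norm_toLp_sq ℂ (hf _)] at hc
    rw [← norm_toLp_sq ℂ (Lp.memLp w), Lp.toLp_coeFn]
    exact norm_sq_le_of_tendsto_inner (hlim w) hc

end WeakCompactness

section QuadraticForm

variable {p : ℝ → ℝ} {t : ℝ} {y f z g : ℝ → ℂ}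

/-- `y` lies in the form domain of the quasi-periodic problem and `f` is its derivative: `y` is an
`H¹` function on `[0, 1]` with `y(1) = e^{it} y(0)`. -/
structure IsQPAdmissible (t : ℝ) (y f : ℝ → ℂ) : Prop where
  isPrimitiveOn : IsPrimitiveOn y f 0 1
  memLp : MemLp f 2 (volume.restrict 𝕀)
  apply_one : y 1 = planeWave t 1 * y 0

/-- The quadratic form `∫ |y'|² + p |y|²` of `-y'' + p y` on `[0, 1]`, with `f = y'`. -/
noncomputable def qpForm (p : ℝ → ℝ) (y f : ℝ → ℂ) : ℝ :=
  ∫ x in 𝕀, (‖f x‖ ^ 2 + p x * ‖y x‖ ^ 2)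

/-- The sesquilinear form `∫ y' z̄' + p y z̄` polarizing `qpForm`, with `f = y'` and `g = z'`. -/
noncomputable def qpSesqForm (p : ℝ → ℝ) (y f z g : ℝ → ℂ) : ℂ :=
  ∫ x in 𝕀, (f x * conj (g x) + p x * (y x * conj (z x)))

theorem isQPAdmissible_planeWave {ν : ℝ} (hν : planeWave ν 1 = planeWave t 1) :
    IsQPAdmissible t (planeWave ν) (fun x => Complex.I * ν * planeWave ν x) where
  isPrimitiveOn := isPrimitiveOn_planeWave ν 0 1
  memLp := MemLp.of_bound (by fun_prop) |ν| (ae_of_all _ fun x => by simp)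
  apply_one := by simp [hν]

namespace IsQPAdmissible

theorem add (hy : IsQPAdmissible t y f) (hz : IsQPAdmissible t z g) :
    IsQPAdmissible t (fun x => y x + z x) (fun x => f x + g x) where
  isPrimitiveOn := hy.isPrimitiveOn.add hz.isPrimitiveOn
  memLp := hy.memLp.add hz.memLp
  apply_one := by rw [hy.apply_one, hz.apply_one, mul_add]

theorem const_mul (hy : IsQPAdmissible t y f) (c : ℂ) :
    IsQPAdmissible t (fun x => c * y x) (fun x => c * f x) where
  isPrimitiveOn := hy.isPrimitiveOn.clm_comp (ContinuousLinearMap.mul ℝ ℂ c)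
  memLp := hy.memLp.const_mul c
  apply_one := by rw [hy.apply_one, mul_left_comm]

theorem continuousOn (hy : IsQPAdmissible t y f) : ContinuousOn y 𝕀 :=
  hy.isPrimitiveOn.continuousOn

theorem integrableOn_deriv_norm_sq (hy : IsQPAdmissible t y f) :
    IntegrableOn (fun x => ‖f x‖ ^ 2) 𝕀 :=
  (memLp_two_iff_integrable_sq_norm hy.memLp.1).1 hy.memLp

theorem integrableOn_norm_sq (hy : IsQPAdmissible t y f) : IntegrableOn (fun x => ‖y x‖ ^ 2) 𝕀 :=
  (hy.continuousOn.norm.pow 2).integrableOn_Icc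

theorem integrableOn_mul_norm_sq (hy : IsQPAdmissible t y f) (hp : IntegrableOn p 𝕀) :
    IntegrableOn (fun x => p x * ‖y x‖ ^ 2) 𝕀 :=
  hp.mul_continuousOn (hy.continuousOn.norm.pow 2) isCompact_Icc

theorem integrableOn_qpForm (hy : IsQPAdmissible t y f) (hp : IntegrableOn p 𝕀) :
    IntegrableOn (fun x => ‖f x‖ ^ 2 + p x * ‖y x‖ ^ 2) 𝕀 :=
  hy.integrableOn_deriv_norm_sq.add (hy.integrableOn_mul_norm_sq hp)

theorem integrableOn_qpSesqForm (hy : IsQPAdmissible t y f) (hz : IsQPAdmissible t z g)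
    (hp : IntegrableOn p 𝕀) :
    IntegrableOn (fun x => f x * conj (g x) + p x * (y x * conj (z x))) 𝕀 := by
  have hpC : IntegrableOn (fun x => (p x : ℂ)) 𝕀 := hp.ofReal
  exact (hy.memLp.integrable_mul hz.memLp.star).add <| hpC.mul_continuousOn
    (hy.continuousOn.mul (Complex.continuous_conj.comp_continuousOn hz.continuousOn)) isCompact_Icc

theorem qpForm_eq (hy : IsQPAdmissible t y f) (hp : IntegrableOn p 𝕀) :
    qpForm p y f = (∫ x in 𝕀, ‖f x‖ ^ 2) + ∫ x in 𝕀, p x * ‖y x‖ ^ 2 :=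
  integral_add hy.integrableOn_deriv_norm_sq (hy.integrableOn_mul_norm_sq hp)

theorem qpForm_sub_const (hy : IsQPAdmissible t y f) (hp : IntegrableOn p 𝕀) (Λ : ℝ) :
    qpForm (fun x => p x - Λ) y f = qpForm p y f - Λ * ∫ x in 𝕀, ‖y x‖ ^ 2 := by
  have hpΛ : IntegrableOn (fun x => p x - Λ) 𝕀 := hp.sub (integrable_const Λ)
  rw [hy.qpForm_eq hpΛ, hy.qpForm_eq hp]
  simp_rw [sub_mul]
  rw [integral_sub (hy.integrableOn_mul_norm_sq hp) (hy.integrableOn_norm_sq.const_mul Λ),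
    integral_const_mul, add_sub_assoc]

theorem qpForm_add_const_mul (hy : IsQPAdmissible t y f) (hz : IsQPAdmissible t z g)
    (hp : IntegrableOn p 𝕀) (c : ℂ) :
    qpForm p (fun x => y x + c * z x) (fun x => f x + c * g x)
      = qpForm p y f + 2 * (conj c * qpSesqForm p y f z g).re + ‖c‖ ^ 2 * qpForm p z g := by
  have hsesq := (hy.integrableOn_qpSesqForm hz hp).const_mul (conj c)
  have hre : (∫ x in 𝕀, conj c * (f x * conj (g x) + p x * (y x * conj (z x)))).re
      = ∫ x in 𝕀, (conj c * (f x * conj (g x) + p x * (y x * conj (z x)))).re :=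
    (integral_re hsesq).symm
  have hsesq_re :
      IntegrableOn (fun x => (conj c * (f x * conj (g x) + p x * (y x * conj (z x)))).re) 𝕀 :=
    hsesq.re
  unfold qpForm qpSesqForm
  rw [← integral_const_mul, hre, ← integral_const_mul, ← integral_const_mul,
    ← integral_add (hy.integrableOn_qpForm hp) (hsesq_re.const_mul 2),
    ← integral_add ((hy.integrableOn_qpForm hp).fun_add (hsesq_re.const_mul 2))
      ((hz.integrableOn_qpForm hp).const_mul _)]
  congr 1 with x
  simp only [Complex.sq_norm, Complex.normSq_apply, Complex.add_re, Complex.add_im,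
    Complex.mul_re, Complex.mul_im, Complex.conj_re, Complex.conj_im, Complex.ofReal_re,
    Complex.ofReal_im]
  ring

end IsQPAdmissible

theorem qpForm_const_mul (p : ℝ → ℝ) (y f : ℝ → ℂ) (c : ℂ) :
    qpForm p (fun x => c * y x) (fun x => c * f x) = ‖c‖ ^ 2 * qpForm p y f := by
  rw [qpForm, qpForm, ← integral_const_mul]
  congr 1 with x
  simp only [norm_mul, mul_pow]
  ring

end QuadraticForm

section EulerLagrange

variable {p q : ℝ → ℝ} {t : ℝ} {y f z g G : ℝ → ℂ}

theorem qpSesqForm_eq_zero_of_qpForm_eq_zero (hp : IntegrableOn p 𝕀)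
    (hnonneg : ∀ z g, IsQPAdmissible t z g → 0 ≤ qpForm p z g) (hy : IsQPAdmissible t y f)
    (hy_zero : qpForm p y f = 0) (hz : IsQPAdmissible t z g) : qpSesqForm p y f z g = 0 := by
  set S := qpSesqForm p y f z g with hS
  have hquad (ε : ℝ) :
      0 ≤ ‖S‖ ^ 2 * qpForm p z g * (ε * ε) + 2 * ‖S‖ ^ 2 * ε + 0 := by
    have hre : (conj (ε * S) * S).re = ε * ‖S‖ ^ 2 := by
      rw [map_mul, Complex.conj_ofReal, mul_assoc, Complex.conj_mul', ← Complex.ofReal_pow,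
        Complex.re_ofReal_mul, Complex.ofReal_re]
    have h := hnonneg _ _ (hy.add (hz.const_mul (ε * S)))
    rw [hy.qpForm_add_const_mul hz hp, hy_zero, ← hS, hre, norm_mul, Complex.norm_real, mul_pow,
      Real.norm_eq_abs, sq_abs] at h
    linarith
  have hdiscrim := discrim_le_zero hquad
  rw [discrim, mul_zero, sub_zero, mul_pow] at hdiscrim
  have hpow : (‖S‖ ^ 2) ^ 2 = 0 := by linarith [sq_nonneg (‖S‖ ^ 2)]
  simpa using hpow

theorem IsQPAdmissible.qpSesqForm_eq_integral_sub_mul_conj_add (hy : IsQPAdmissible t y f)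
    (hz : IsQPAdmissible t z g) (hG : IsPrimitiveOn G (fun x => p x * y x) 0 1) :
    qpSesqForm p y f z g
      = (∫ x in 𝕀, (f x - G x) * conj (g x)) + (G 1 * conj (z 1) - G 0 * conj (z 0)) := by
  have hprod := hG.mul hz.isPrimitiveOn.conj
  have hint : IntegrableOn (fun x => (f x - G x) * conj (g x)) 𝕀 :=
    (hy.memLp.sub hG.memLp_two).integrable_mul hz.memLp.star
  rw [hprod.sub_eq_setIntegral zero_le_one, ← integral_add hint hprod.integrableOn, qpSesqForm]
  congr 1 with x
  ring

theorem exists_isPrimitiveOn_integral_sub_eq_zero {E : Type*} [NormedAddCommGroup E]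
    [NormedSpace ℝ E] [CompleteSpace E] {f h : ℝ → E} (hf : IntegrableOn f 𝕀)
    (hh : IntegrableOn h 𝕀) : ∃ G, IsPrimitiveOn G h 0 1 ∧ ∫ x in 𝕀, (f x - G x) = 0 := by
  have hP := isPrimitiveOn_add_integral hh 0
  set P : ℝ → E := fun x => 0 + ∫ s in (0 : ℝ)..x, h s
  have hfP : IntegrableOn (fun x => f x - P x) 𝕀 := hf.sub hP.continuousOn.integrableOn_Icc
  refine ⟨fun x => (∫ x in 𝕀, (f x - P x)) + ∫ s in (0 : ℝ)..x, h s,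
    isPrimitiveOn_add_integral hh _, ?_⟩
  have hsub := integral_sub hfP (integrable_const (∫ x in 𝕀, (f x - P x)))
  rw [integral_const, measureReal_restrict_apply_univ, Real.volume_real_Icc_of_le zero_le_one,
    sub_zero, one_smul, sub_self] at hsub
  rw [← hsub]
  congr 1 with x
  simp only [P, zero_add, sub_add_eq_sub_sub_swap]

theorem ae_eq_of_qpSesqForm_eq_zero (hy : IsQPAdmissible t y f)
    (hsesq : ∀ z g, IsQPAdmissible t z g → qpSesqForm p y f z g = 0)
    (hG : IsPrimitiveOn G (fun x => p x * y x) 0 1) (hmean : ∫ x in 𝕀, (f x - G x) = 0) :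
    f =ᵐ[volume.restrict 𝕀] G := by
  have hsub_memLp : MemLp (fun x => f x - G x) 2 (volume.restrict 𝕀) := hy.memLp.sub hG.memLp_two
  have hz := isPrimitiveOn_add_integral (a := 0) (b := 1) (hsub_memLp.integrable one_le_two) 0
  set z : ℝ → ℂ := fun x => 0 + ∫ s in (0 : ℝ)..x, (f s - G s)
  have hz_zero : z 0 = 0 := by simp [z]
  have hz_one : z 1 = 0 := by
    have hdiff := hz.sub_eq_setIntegral zero_le_one
    rwa [hz_zero, hmean, sub_zero] at hdiff
  have hz_adm : IsQPAdmissible t z (fun x => f x - G x) :=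
    ⟨hz, hsub_memLp, by rw [hz_one, hz_zero, mul_zero]⟩
  have horth := hsesq _ _ hz_adm
  simp only [hy.qpSesqForm_eq_integral_sub_mul_conj_add hz_adm hG, hz_one, hz_zero, map_zero,
    mul_zero, sub_zero, add_zero, Complex.mul_conj', ← Complex.ofReal_pow] at horth
  rw [integral_complex_ofReal, Complex.ofReal_eq_zero, integral_eq_zero_iff_of_nonneg
    (fun x => sq_nonneg _) ((memLp_two_iff_integrable_sq_norm hsub_memLp.1).1 hsub_memLp)] at horth
  filter_upwards [horth] with x hx
  simpa [sub_eq_zero] using hx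

theorem apply_one_of_qpSesqForm_eq_zero (hy : IsQPAdmissible t y f)
    (hsesq : ∀ z g, IsQPAdmissible t z g → qpSesqForm p y f z g = 0)
    (hG : IsPrimitiveOn G (fun x => p x * y x) 0 1) (hfG : f =ᵐ[volume.restrict 𝕀] G) :
    G 1 = planeWave t 1 * G 0 := by
  have hwave_adm := isQPAdmissible_planeWave (ν := t) rfl
  have hint_zero : ∫ x in 𝕀, (f x - G x) * conj (Complex.I * t * planeWave t x) = 0 :=
    integral_eq_zero_of_ae <| by
      filter_upwards [hfG] with x hx
      simp [hx]
  have hwave := hsesq _ _ hwave_adm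
  rw [hy.qpSesqForm_eq_integral_sub_mul_conj_add hwave_adm hG, hint_zero, zero_add,
    planeWave_zero_right, map_one, mul_one, sub_eq_zero] at hwave
  rw [← hwave, mul_left_comm, Complex.mul_conj', norm_planeWave]
  simp

theorem exists_isPrimitiveOn_ae_eq_of_qpSesqForm_eq_zero (hp : IntegrableOn p 𝕀)
    (hy : IsQPAdmissible t y f) (hsesq : ∀ z g, IsQPAdmissible t z g → qpSesqForm p y f z g = 0) :
    ∃ G, IsPrimitiveOn G (fun x => p x * y x) 0 1 ∧ f =ᵐ[volume.restrict 𝕀] G ∧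
      G 1 = planeWave t 1 * G 0 := by
  have hpC : IntegrableOn (fun x => (p x : ℂ)) 𝕀 := hp.ofReal
  obtain ⟨G, hG, hmean⟩ := exists_isPrimitiveOn_integral_sub_eq_zero
    hy.isPrimitiveOn.integrableOn (hpC.mul_continuousOn hy.continuousOn isCompact_Icc)
  have hfG := ae_eq_of_qpSesqForm_eq_zero hy hsesq hG hmean
  exact ⟨G, hG, hfG, apply_one_of_qpSesqForm_eq_zero hy hsesq hG hfG⟩

theorem isQPEigenvalue_of_qpForm_eq_zero {Λ : ℝ} (hq : IntegrableOn q 𝕀)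
    (hnonneg : ∀ z g, IsQPAdmissible t z g → 0 ≤ qpForm (fun x => q x - Λ) z g)
    (hy : IsQPAdmissible t y f) (hy_zero : qpForm (fun x => q x - Λ) y f = 0)
    (hy_ne : ∃ x ∈ 𝕀, y x ≠ 0) : IsQPEigenvalue q t Λ := by
  have hqΛ : IntegrableOn (fun x => q x - Λ) 𝕀 := hq.sub (integrable_const Λ)
  obtain ⟨G, hG, hfG, hG_one⟩ := exists_isPrimitiveOn_ae_eq_of_qpSesqForm_eq_zero hqΛ hy
    fun z g hz => qpSesqForm_eq_zero_of_qpForm_eq_zero hqΛ hnonneg hy hy_zero hz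
  refine ⟨y, G, _, hy_ne, fun x hx => ?_, hG.continuousOn, hG.integrableOn, hG.eq_add_integral,
    ae_of_all _ fun x => ?_, ?_, ?_⟩
  · exact (hy.isPrimitiveOn.congr_deriv hfG).hasDerivWithinAt hG.continuousOn hx
  · push_cast
    ring
  · rw [hy.apply_one, planeWave_one]
  · rw [hG_one, planeWave_one]

end EulerLagrange

section Coercivity

variable {q : ℝ → ℝ} {y f : ℝ → ℂ}

theorem IsPrimitiveOn.norm_sq_le (hy : IsPrimitiveOn y f 0 1) (hf : MemLp f 2 (volume.restrict 𝕀))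
    {δ : ℝ} (hδ : 0 < δ) {x : ℝ} (hx : x ∈ 𝕀) :
    ‖y x‖ ^ 2 ≤ (1 + δ⁻¹) * (∫ s in 𝕀, ‖y s‖ ^ 2) + δ * ∫ s in 𝕀, ‖f s‖ ^ 2 := by
  have hy_int : IntegrableOn (fun s => ‖y s‖ ^ 2) 𝕀 := (hy.continuousOn.norm.pow 2).integrableOn_Icc
  have hf_int : IntegrableOn (fun s => ‖f s‖ ^ 2) 𝕀 := (memLp_two_iff_integrable_sq_norm hf.1).1 hf
  obtain ⟨x₀, hx₀, hmean⟩ : ∃ x₀ ∈ 𝕀, ‖y x₀‖ ^ 2 ≤ ∫ s in 𝕀, ‖y s‖ ^ 2 := by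
    simpa [setAverage_eq] using exists_le_setAverage (μ := volume) (by simp) (by simp) hy_int
  have hsq : IsPrimitiveOn (fun s => y s * conj (y s))
      (fun s => f s * conj (y s) + y s * conj (f s)) 0 1 := hy.mul hy.conj
  have hyoung (s : ℝ) :
      ‖f s * conj (y s) + y s * conj (f s)‖ ≤ δ⁻¹ * ‖y s‖ ^ 2 + δ * ‖f s‖ ^ 2 := by
    refine (norm_add_le _ _).trans ?_
    simp only [norm_mul, RCLike.norm_conj]
    have hsquare : 0 ≤ δ⁻¹ * (‖y s‖ - δ * ‖f s‖) ^ 2 := by positivity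
    have hexpand : δ⁻¹ * (‖y s‖ - δ * ‖f s‖) ^ 2
        = δ⁻¹ * ‖y s‖ ^ 2 + δ * ‖f s‖ ^ 2 - 2 * (‖f s‖ * ‖y s‖) := by
      field_simp
      ring
    linarith
  have hosc : ‖y x‖ ^ 2 - ‖y x₀‖ ^ 2
      ≤ δ⁻¹ * (∫ s in 𝕀, ‖y s‖ ^ 2) + δ * ∫ s in 𝕀, ‖f s‖ ^ 2 :=
    calc ‖y x‖ ^ 2 - ‖y x₀‖ ^ 2
        = ‖y x * conj (y x)‖ - ‖y x₀ * conj (y x₀)‖ := by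
          simp only [norm_mul, RCLike.norm_conj, sq]
      _ ≤ ∫ s in 𝕀, ‖f s * conj (y s) + y s * conj (f s)‖ :=
          (norm_sub_norm_le _ _).trans (hsq.norm_sub_le hx hx₀)
      _ ≤ ∫ s in 𝕀, (δ⁻¹ * ‖y s‖ ^ 2 + δ * ‖f s‖ ^ 2) :=
          integral_mono hsq.integrableOn.norm ((hy_int.const_mul _).add (hf_int.const_mul _)) hyoung
      _ = _ := by
          rw [integral_add (hy_int.const_mul _) (hf_int.const_mul _), integral_const_mul,
            integral_const_mul]
  linarith

theorem exists_integral_norm_sq_le_two_mul_qpForm_add (hq : IntegrableOn q 𝕀) :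
    ∃ C : ℝ, ∀ t y f, IsQPAdmissible t y f →
      ∫ x in 𝕀, ‖f x‖ ^ 2 ≤ 2 * qpForm q y f + C * ∫ x in 𝕀, ‖y x‖ ^ 2 := by
  set Q := ∫ x in 𝕀, |q x|
  have hQ : 0 ≤ Q := integral_nonneg fun x => abs_nonneg _
  refine ⟨2 * (Q * (2 * Q + 2)), fun t y f hy => ?_⟩
  set N := ∫ x in 𝕀, ‖y x‖ ^ 2
  set D := ∫ x in 𝕀, ‖f x‖ ^ 2
  have hD : 0 ≤ D := integral_nonneg fun x => sq_nonneg _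
  have hδ : 0 < (2 * Q + 1)⁻¹ := inv_pos.2 (by linarith [hQ])
  have hpotential : -(Q * ((2 * Q + 2) * N + (2 * Q + 1)⁻¹ * D)) ≤ ∫ x in 𝕀, q x * ‖y x‖ ^ 2 := by
    rw [← integral_mul_const, ← integral_neg]
    refine setIntegral_mono_on (hq.abs.mul_const _).neg (hy.integrableOn_mul_norm_sq hq)
      measurableSet_Icc fun x hx => ?_
    have hsup := hy.isPrimitiveOn.norm_sq_le hy.memLp hδ hx
    rw [inv_inv, add_comm 1, add_assoc, one_add_one_eq_two] at hsup
    calc -(|q x| * ((2 * Q + 2) * N + (2 * Q + 1)⁻¹ * D))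
        ≤ -(|q x| * ‖y x‖ ^ 2) := by gcongr
      _ = -|q x| * ‖y x‖ ^ 2 := by ring
      _ ≤ q x * ‖y x‖ ^ 2 := by gcongr; exact neg_abs_le _
  have hhalf : Q * ((2 * Q + 1)⁻¹ * D) ≤ D / 2 := by
    rw [← mul_assoc, ← div_eq_mul_inv, div_mul_eq_mul_div, div_le_div_iff₀ (by positivity) two_pos]
    nlinarith
  linarith [hy.qpForm_eq hq]

end Coercivity

section Minimizer

variable {p q : ℝ → ℝ} {t : ℝ}

theorem IsQPAdmissible.exists_subseq_tendsto {y f : ℕ → ℝ → ℂ} {K R : ℝ}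
    (hyf : ∀ n, IsQPAdmissible t (y n) (f n)) (hK : ∀ n, ‖y n 0‖ ≤ K)
    (hR : ∀ n, ∫ x in 𝕀, ‖f n x‖ ^ 2 ≤ R) :
    ∃ (z g : ℝ → ℂ) (φ : ℕ → ℕ), IsQPAdmissible t z g ∧ StrictMono φ ∧
      (∀ x ∈ 𝕀, Tendsto (fun n => y (φ n) x) atTop (𝓝 (z x))) ∧
      ∀ c, Tendsto (fun n => ∫ x in 𝕀, ‖f (φ n) x‖ ^ 2) atTop (𝓝 c) →
        ∫ x in 𝕀, ‖g x‖ ^ 2 ≤ c := by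
  obtain ⟨z₀, -, φ₁, hφ₁, hz₀⟩ := (isCompact_closedBall (0 : ℂ) K).tendsto_subseq
    (x := fun n => y n 0) fun n => mem_closedBall_zero_iff.2 (hK n)
  obtain ⟨g, φ₂, hg, hφ₂, hweak, henergy⟩ := exists_subseq_tendsto_setIntegral_of_memLp_two
    (fun n => (hyf (φ₁ n)).memLp) fun n => hR (φ₁ n)
  have hz := isPrimitiveOn_add_integral (a := 0) (b := 1) (hg.integrable one_le_two) z₀
  set z : ℝ → ℂ := fun x => z₀ + ∫ s in (0 : ℝ)..x, g s
  have hlim (x : ℝ) (hx : x ∈ 𝕀) : Tendsto (fun n => y (φ₁ (φ₂ n)) x) atTop (𝓝 (z x)) := by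
    have hrestrict (u : ℝ → ℂ) :
        ∫ s in (0 : ℝ)..x, u s = ∫ s in Ioc 0 x, u s ∂volume.restrict 𝕀 := by
      rw [intervalIntegral.integral_of_le hx.1, Measure.restrict_restrict measurableSet_Ioc,
        inter_eq_left.2 (Ioc_subset_Icc_self.trans (Icc_subset_Icc_right hx.2))]
    simp only [(hyf _).isPrimitiveOn.eq_add_integral x hx, z, hrestrict]
    exact (hz₀.comp hφ₂.tendsto_atTop).add (hweak _ measurableSet_Ioc)
  refine ⟨z, g, φ₁ ∘ φ₂, ⟨hz, hg, ?_⟩, hφ₁.comp hφ₂, hlim, henergy⟩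
  refine tendsto_nhds_unique (hlim 1 (right_mem_Icc.2 zero_le_one)) ?_
  simp only [(hyf _).apply_one]
  exact (hlim 0 (left_mem_Icc.2 zero_le_one)).const_mul _

theorem tendsto_setIntegral_mul_norm_sq {y : ℕ → ℝ → ℂ} {z : ℝ → ℂ} {K : ℝ}
    (hp : IntegrableOn p 𝕀) (hy : ∀ n, ContinuousOn (y n) 𝕀)
    (hK : ∀ n, ∀ x ∈ 𝕀, ‖y n x‖ ^ 2 ≤ K)
    (hlim : ∀ x ∈ 𝕀, Tendsto (fun n => y n x) atTop (𝓝 (z x))) :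
    Tendsto (fun n => ∫ x in 𝕀, p x * ‖y n x‖ ^ 2) atTop (𝓝 (∫ x in 𝕀, p x * ‖z x‖ ^ 2)) := by
  refine tendsto_integral_of_dominated_convergence (fun x => |p x| * K)
    (fun n => (hp.mul_continuousOn ((hy n).norm.pow 2) isCompact_Icc).aestronglyMeasurable)
    (hp.abs.mul_const K) (fun n => ?_) ?_
  · filter_upwards [ae_restrict_mem measurableSet_Icc] with x hx
    rw [norm_mul, Real.norm_eq_abs, norm_pow, norm_norm]
    gcongr
    exact hK n x hx
  · filter_upwards [ae_restrict_mem measurableSet_Icc] with x hx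
    exact ((hlim x hx).norm.pow 2).const_mul _

theorem exists_isQPAdmissible_qpForm_le_of_tendsto {y f : ℕ → ℝ → ℂ} {Λ : ℝ}
    (hq : IntegrableOn q 𝕀) (hyf : ∀ n, IsQPAdmissible t (y n) (f n))
    (hnorm : ∀ n, ∫ x in 𝕀, ‖y n x‖ ^ 2 = 1)
    (hform : Tendsto (fun n => qpForm q (y n) (f n)) atTop (𝓝 Λ)) :
    ∃ z g, IsQPAdmissible t z g ∧ ∫ x in 𝕀, ‖z x‖ ^ 2 = 1 ∧ qpForm q z g ≤ Λ := by
  obtain ⟨C, hC⟩ := exists_integral_norm_sq_le_two_mul_qpForm_add hq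
  obtain ⟨B, hB⟩ := hform.bddAbove_range
  have henergy (n : ℕ) : ∫ x in 𝕀, ‖f n x‖ ^ 2 ≤ 2 * B + C := by
    have hle := hC t _ _ (hyf n)
    rw [hnorm, mul_one] at hle
    linarith [hB (mem_range_self n)]
  have hsup (n : ℕ) (x : ℝ) (hx : x ∈ 𝕀) : ‖y n x‖ ^ 2 ≤ 2 + (2 * B + C) := by
    have hle := (hyf n).isPrimitiveOn.norm_sq_le (hyf n).memLp one_pos hx
    rw [hnorm] at hle
    linarith [henergy n]
  obtain ⟨z, g, φ, hzg, hφ, hlim, hlsc⟩ := IsQPAdmissible.exists_subseq_tendsto hyf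
    (fun n => Real.le_sqrt_of_sq_le (hsup n 0 (left_mem_Icc.2 zero_le_one))) henergy
  have hweighted (p : ℝ → ℝ) (hp : IntegrableOn p 𝕀) :
      Tendsto (fun n => ∫ x in 𝕀, p x * ‖y (φ n) x‖ ^ 2) atTop (𝓝 (∫ x in 𝕀, p x * ‖z x‖ ^ 2)) :=
    tendsto_setIntegral_mul_norm_sq hp (fun n => (hyf (φ n)).continuousOn)
      (fun n => hsup (φ n)) hlim
  have hz_norm : ∫ x in 𝕀, ‖z x‖ ^ 2 = 1 := by
    have hone := hweighted (fun _ => 1) (integrable_const 1)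
    simp only [one_mul, hnorm] at hone
    exact tendsto_nhds_unique hone tendsto_const_nhds
  have henergy_lim : Tendsto (fun n => ∫ x in 𝕀, ‖f (φ n) x‖ ^ 2) atTop
      (𝓝 (Λ - ∫ x in 𝕀, q x * ‖z x‖ ^ 2)) :=
    ((hform.comp hφ.tendsto_atTop).sub (hweighted q hq)).congr fun n => by
      rw [Function.comp_apply, (hyf _).qpForm_eq hq, add_sub_cancel_right]
  exact ⟨z, g, hzg, hz_norm, by linarith [hzg.qpForm_eq hq, hlsc _ henergy_lim]⟩

/-- The values of the quadratic form on the `L²`-normalized functions of the form domain; the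
smallest of them is the lowest eigenvalue of the quasi-periodic problem. -/
def qpRayleighValues (q : ℝ → ℝ) (t : ℝ) : Set ℝ :=
  {r | ∃ y f, IsQPAdmissible t y f ∧ ∫ x in 𝕀, ‖y x‖ ^ 2 = 1 ∧ qpForm q y f = r}

theorem qpRayleighValues_nonempty (q : ℝ → ℝ) (t : ℝ) : (qpRayleighValues q t).Nonempty :=
  ⟨_, planeWave t, _, isQPAdmissible_planeWave rfl, by simp, rfl⟩

theorem bddBelow_qpRayleighValues (hq : IntegrableOn q 𝕀) (t : ℝ) :
    BddBelow (qpRayleighValues q t) := by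
  obtain ⟨C, hC⟩ := exists_integral_norm_sq_le_two_mul_qpForm_add hq
  refine ⟨-C / 2, ?_⟩
  rintro _ ⟨y, f, hy, hnorm, rfl⟩
  have hle := hC t y f hy
  rw [hnorm] at hle
  have hD : 0 ≤ ∫ x in 𝕀, ‖f x‖ ^ 2 := integral_nonneg fun x => sq_nonneg _
  linarith

theorem exists_isLeast_qpRayleighValues (hq : IntegrableOn q 𝕀) (t : ℝ) :
    ∃ Λ, IsLeast (qpRayleighValues q t) Λ := by
  have hbdd := bddBelow_qpRayleighValues hq t
  obtain ⟨r, -, hr_lim, hr⟩ := exists_seq_tendsto_sInf (qpRayleighValues_nonempty q t) hbdd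
  choose y f hyf hnorm hform using hr
  obtain ⟨z, g, hzg, hz_norm, hz_form⟩ :=
    exists_isQPAdmissible_qpForm_le_of_tendsto hq hyf hnorm
      (hr_lim.congr fun n => (hform n).symm)
  exact ⟨_, ⟨z, g, hzg, hz_norm, rfl⟩, fun r hr => hz_form.trans (csInf_le hbdd hr)⟩

theorem mul_integral_norm_sq_le_qpForm {Λ : ℝ} (hq : IntegrableOn q 𝕀)
    (hΛ : Λ ∈ lowerBounds (qpRayleighValues q t)) {z g : ℝ → ℂ} (hz : IsQPAdmissible t z g) :
    Λ * ∫ x in 𝕀, ‖z x‖ ^ 2 ≤ qpForm q z g := by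
  set N := ∫ x in 𝕀, ‖z x‖ ^ 2 with hN_def
  have hN_nonneg : 0 ≤ N := integral_nonneg fun x => sq_nonneg _
  rcases hN_nonneg.eq_or_lt with hN | hN
  · obtain ⟨C, hC⟩ := exists_integral_norm_sq_le_two_mul_qpForm_add hq
    have hle := hC t z g hz
    rw [← hN_def, ← hN, mul_zero, add_zero] at hle
    have hD : 0 ≤ ∫ x in 𝕀, ‖g x‖ ^ 2 := integral_nonneg fun x => sq_nonneg _
    rw [← hN]
    linarith
  · set c : ℂ := ↑((√N)⁻¹ : ℝ)
    have hc : ‖c‖ ^ 2 = N⁻¹ := by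
      rw [Complex.norm_real, norm_inv, inv_pow, Real.norm_eq_abs, sq_abs, Real.sq_sqrt hN.le]
    have hnorm : ∫ x in 𝕀, ‖c * z x‖ ^ 2 = 1 := by
      simp only [norm_mul, mul_pow]
      rw [integral_const_mul, hc, ← hN_def, inv_mul_cancel₀ hN.ne']
    have hle := hΛ ⟨_, _, hz.const_mul c, hnorm, qpForm_const_mul q z g c⟩
    rwa [hc, inv_mul_eq_div, le_div_iff₀ hN] at hle

theorem exists_isQPEigenvalue_mul_integral_norm_sq_le (hq : IntegrableOn q 𝕀) (t : ℝ) :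
    ∃ Λ : ℝ, IsQPEigenvalue q t Λ ∧
      ∀ z g, IsQPAdmissible t z g → Λ * ∫ x in 𝕀, ‖z x‖ ^ 2 ≤ qpForm q z g := by
  obtain ⟨Λ, ⟨y, f, hy, hnorm, hform⟩, hΛ⟩ := exists_isLeast_qpRayleighValues hq t
  refine ⟨Λ, isQPEigenvalue_of_qpForm_eq_zero hq (fun z g hz => ?_) hy ?_ ?_,
    fun z g hz => mul_integral_norm_sq_le_qpForm hq hΛ hz⟩
  · rw [hz.qpForm_sub_const hq]
    exact sub_nonneg.2 (mul_integral_norm_sq_le_qpForm hq hΛ hz)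
  · rw [hy.qpForm_sub_const hq, hform, hnorm, mul_one, sub_self]
  · by_contra! hzero
    rw [setIntegral_congr_fun measurableSet_Icc fun x hx => by rw [hzero x hx]] at hnorm
    simp at hnorm

end Minimizer

section Ambarzumyan

variable {q : ℝ → ℝ} {t : ℝ}

theorem qpForm_sub_sq_planeWave (q : ℝ → ℝ) (τ : ℝ) :
    qpForm (fun x => q x - τ ^ 2) (planeWave τ) (fun x => Complex.I * τ * planeWave τ x)
      = ∫ x in 𝕀, q x := by
  simp [qpForm]

theorem ae_eq_zero_of_sq_mul_integral_norm_sq_le_qpForm {τ : ℝ} (hq : IntegrableOn q 𝕀)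
    (hmean : ∫ x in 𝕀, q x = 0) (hτ : planeWave τ 1 = planeWave t 1)
    (hle : ∀ z g, IsQPAdmissible t z g → τ ^ 2 * ∫ x in 𝕀, ‖z x‖ ^ 2 ≤ qpForm q z g) :
    ∀ᵐ x ∂volume.restrict 𝕀, q x = 0 := by
  have hqτ : IntegrableOn (fun x => q x - τ ^ 2) 𝕀 := hq.sub (integrable_const _)
  have hwave := isQPAdmissible_planeWave hτ
  have hnonneg (z g : ℝ → ℂ) (hz : IsQPAdmissible t z g) :
      0 ≤ qpForm (fun x => q x - τ ^ 2) z g := by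
    rw [hz.qpForm_sub_const hq]
    exact sub_nonneg.2 (hle z g hz)
  obtain ⟨G, hG, hG_ae, -⟩ := exists_isPrimitiveOn_ae_eq_of_qpSesqForm_eq_zero hqτ hwave
    fun z g hz => qpSesqForm_eq_zero_of_qpForm_eq_zero hqτ hnonneg hwave
      ((qpForm_sub_sq_planeWave q τ).trans hmean) hz
  have hderiv : IsPrimitiveOn (fun x => Complex.I * τ * planeWave τ x)
      (fun x => Complex.I * τ * (Complex.I * τ * planeWave τ x)) 0 1 :=
    (isPrimitiveOn_planeWave τ 0 1).clm_comp (ContinuousLinearMap.mul ℝ ℂ (Complex.I * τ))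
  have hG_eq := Measure.eqOn_Icc_of_ae_eq volume zero_ne_one hG_ae hderiv.continuousOn
    hG.continuousOn
  filter_upwards [hderiv.deriv_ae_eq_of_eqOn hG hG_eq] with x hx
  rw [← mul_assoc] at hx
  have hcoeff := mul_right_cancel₀ (planeWave_ne_zero τ x) hx
  rw [mul_mul_mul_comm, Complex.I_mul_I] at hcoeff
  have hqx : (q x : ℂ) = 0 := by
    push_cast at hcoeff
    linear_combination -hcoeff
  exact_mod_cast hqx

theorem exists_two_mul_int_mul_pi_add_sq_eq_min (t : ℝ) :
    ∃ m : ℤ, (2 * m * Real.pi + t) ^ 2 = min (t ^ 2) ((2 * Real.pi - t) ^ 2) := by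
  rcases min_choice (t ^ 2) ((2 * Real.pi - t) ^ 2) with h | h
  · exact ⟨0, by rw [h]; simp⟩
  · exact ⟨-1, by rw [h]; push_cast; ring⟩

theorem frequently_cofinite_int_of_forall_natCast {P : ℤ → Prop} (hP : ∀ n : ℕ, 1 ≤ n → P n) :
    ∃ᶠ n : ℤ in cofinite, P n := by
  refine (Nat.cast_injective (R := ℤ)).tendsto_cofinite.frequently ?_
  rw [Nat.cofinite_eq_atTop]
  exact ((eventually_ge_atTop 1).mono hP).frequently

theorem ambarzumyan_quasiPeriodic_plus_general
    (q : ℝ → ℝ) (hq : IntegrableOn q (Icc (0 : ℝ) 1)) (t : ℝ) (m : ℤ)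
    (hlow : ∀ r : ℝ, IsQPEigenvalue q t r → (2 * m * Real.pi + t) ^ 2 ≤ r)
    (hspec : ∃ᶠ n : ℤ in cofinite, IsQPEigenvalue q t (((2 * n * Real.pi + t) ^ 2 : ℝ) : ℂ)) :
    ∀ᵐ x ∂volume.restrict (Icc (0 : ℝ) 1), q x = 0 := by
  obtain ⟨Λ, hΛ, hΛ_le⟩ := exists_isQPEigenvalue_mul_integral_norm_sq_le hq t
  refine ae_eq_zero_of_sq_mul_integral_norm_sq_le_qpForm hq
    (integral_eq_zero_of_frequently_isQPEigenvalue_s1 hq hspec)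
    (planeWave_two_mul_int_mul_pi_add_one m t) fun z g hz => ?_
  exact (mul_le_mul_of_nonneg_right (hlow Λ hΛ) (integral_nonneg fun x => sq_nonneg _)).trans
    (hΛ_le z g hz)

end Ambarzumyan

/-- Ambarzumyan-type theorem for `L_t(q)` using the eigenvalues `(2nπ+t)²`. -/
theorem ambarzumyan_quasiPeriodic_plus
    (q : ℝ → ℝ) (hq : IntegrableOn q (Icc (0:ℝ) 1))
    (t : ℝ) (ht : t ∈ Ico (0:ℝ) (2 * Real.pi))
    (hlow : ∀ lam : ℂ, IsQPEigenvalue q t lam →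
      ∃ r : ℝ, lam = (r : ℂ) ∧ min (t ^ 2) ((2 * Real.pi - t) ^ 2) ≤ r)
    (hspec : ∀ n : ℕ, 1 ≤ n →
      IsQPEigenvalue q t (((2 * n * Real.pi + t) ^ 2 : ℝ) : ℂ)) :
    ∀ᵐ x ∂(volume.restrict (Icc (0:ℝ) 1)), q x = 0 := by
  obtain ⟨m, hm⟩ := exists_two_mul_int_mul_pi_add_sq_eq_min t
  refine ambarzumyan_quasiPeriodic_plus_general q hq t m (fun r hr => ?_)
    (frequently_cofinite_int_of_forall_natCast fun n hn => by exact_mod_cast hspec n hn)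
  obtain ⟨r', hr', hle⟩ := hlow r hr
  rwa [hm, Complex.ofReal_injective hr']
end
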